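/- arXiv:1702.02490 — 3 statements merged into one kernel-verified Lean document; each statement's English description precedes it below -/
import Mathlib

section
/- Suppose that for i = 1,2 there exist measures μᵢ* ∈ ca₊(Ωᵢ) such that μᵢ ≪ μᵢ* for all μᵢ ∈ Hᵢ°. Then for every f ∈ L⁰₊(Ω) the superhedging duality holds: inf{ m ∈ [0,∞) : f ≤ f₁ ⊕ f₂ for some fᵢ ∈ L⁰₊(Ωᵢ) with π₁(f₁) + π₂(f₂) ≤ m } = sup{ ⟨f,μ⟩ : μ ∈ ca₊(Ω) with μ₁ ∈ H₁° and μ₂ ∈ H₂° }. -/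
/-! The inequality `sup ≤ inf` is weak duality: integrate `f ≤ f₁ ⊕ f₂` (`transportPrice_le`). For the
converse, each real `c` above the transport price must be shown to be a sufficient hedging cost for
`f`, in the sense of `Hedge`.

Everything rests on the stability of hedgeability at a fixed cost under increasing limits
(`Hedge.iSup`). The dominating measure allows the first components of a sequence of hedges to be
chosen almost everywhere convergent (`komlos`); their `limsup` paired with the `liminf` of the second
components still dominates pointwise, and Fatou's lemma controls the cost. This has two uses.

* By σ-compactness it reduces the claim to measures of bounded mass carried by a compact rectangle
  (`hedge_polarOn`, `hedge_polar`). There regularity identifies `Hᵢ°` with the polar of the bounded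
  continuous elements of `Hᵢ` (`mem_polar_of_isCb`).
* On a compact rectangle it makes hedgeability behave like a capacity. The subgraph of a Borel
  function `f` is analytic, so if `f` is not hedgeable at cost `c`, then its subgraph has a compact
  part `T` such that no continuous function above `T` is hedgeable (`exists_compact_of_analytic`).
  Hahn–Banach and Riesz–Markov–Kakutani then produce a single measure `μ` with admissible marginals
  under which all these functions have integral at least `c` (`exists_measure_of_not_hedge`).
  Letting continuous functions decrease to the upper envelope of `T` gives `⟨f,μ⟩ ≥ c`
  (`le_lintegral_of_compact`), so the transport price is at least `c`.
-/

open MeasureTheory Filter ENNReal NNReal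

section Defs

variable {Ω : Type*} [TopologicalSpace Ω] [MeasurableSpace Ω]

/-- The polar of a set `H` of `[0,∞]`-valued Borel functions: all finite positive Borel
measures `μ` with `⟨f,μ⟩ = ∫ f dμ ≤ 1` for every `f ∈ H`. -/
def polar (H : Set (Ω → ℝ≥0∞)) : Set (Measure Ω) :=
  {μ | IsFiniteMeasure μ ∧ ∀ f ∈ H, ∫⁻ x, f x ∂μ ≤ 1}

/-- The bipolar of a set `H` of `[0,∞]`-valued Borel functions. -/
def bipolar (H : Set (Ω → ℝ≥0∞)) : Set (Ω → ℝ≥0∞) :=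
  {f | Measurable f ∧ ∀ μ ∈ polar H, ∫⁻ x, f x ∂μ ≤ 1}

/-- `h` is (the coercion of) a bounded continuous real-valued function. -/
def IsCb (h : Ω → ℝ≥0∞) : Prop :=
  Continuous h ∧ ∃ C : ℝ≥0, ∀ x, h x ≤ C

/-- `h` is (the coercion of) a bounded upper semicontinuous real-valued function. -/
def IsUb (h : Ω → ℝ≥0∞) : Prop :=
  UpperSemicontinuous h ∧ ∃ C : ℝ≥0, ∀ x, h x ≤ C

/-- `H` is monotone. -/
def MonotoneSet (H : Set (Ω → ℝ≥0∞)) : Prop :=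
  ∀ f : Ω → ℝ≥0∞, Measurable f → (∃ h ∈ H, ∀ x, f x ≤ h x) → f ∈ H

/-- `H` is regular. -/
def RegularSet (H : Set (Ω → ℝ≥0∞)) : Prop :=
  ∀ μ : Measure Ω, IsFiniteMeasure μ →
    sSup {x : ℝ≥0∞ | ∃ h ∈ H, IsUb h ∧ x = ∫⁻ ω, h ω ∂μ} =
      sSup {x : ℝ≥0∞ | ∃ h ∈ H, IsCb h ∧ x = ∫⁻ ω, h ω ∂μ}

/-- `H` is closed under `liminf`. -/
def LiminfClosed (H : Set (Ω → ℝ≥0∞)) : Prop :=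
  ∀ h : ℕ → Ω → ℝ≥0∞, (∀ n, h n ∈ H) →
    (fun x => liminf (fun n => h n x) atTop) ∈ H

/-- `H` is convex. -/
def ConvexSet (H : Set (Ω → ℝ≥0∞)) : Prop :=
  ∀ f ∈ H, ∀ g ∈ H, ∀ t : ℝ≥0∞, t ≤ 1 →
    (fun x => t * f x + (1 - t) * g x) ∈ H

/-- The sublinear pricing functional `π(f) = sup_{μ ∈ H°} ⟨f,μ⟩` associated with `H`. -/
noncomputable def priceH (H : Set (Ω → ℝ≥0∞)) (f : Ω → ℝ≥0∞) : ℝ≥0∞ :=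
  sSup {x : ℝ≥0∞ | ∃ μ ∈ polar H, x = ∫⁻ ω, f ω ∂μ}

end Defs

section Transport

variable {Ω₁ Ω₂ : Type*}
  [TopologicalSpace Ω₁] [MeasurableSpace Ω₁]
  [TopologicalSpace Ω₂] [MeasurableSpace Ω₂]

/-- The set `H` of all nonnegative Borel functions on the product space dominated by a sum
`h₁ ⊕ h₂` with `π₁(h₁) + π₂(h₂) ≤ 1`. -/
def transportSet (H₁ : Set (Ω₁ → ℝ≥0∞)) (H₂ : Set (Ω₂ → ℝ≥0∞)) :
    Set (Ω₁ × Ω₂ → ℝ≥0∞) :=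
  {f | Measurable f ∧ ∃ (h₁ : Ω₁ → ℝ≥0∞) (h₂ : Ω₂ → ℝ≥0∞),
    Measurable h₁ ∧ Measurable h₂ ∧ (∀ ω, f ω ≤ h₁ ω.1 + h₂ ω.2) ∧
    priceH H₁ h₁ + priceH H₂ h₂ ≤ 1}

/-- The finite positive Borel measures on the product space whose first marginal lies in
`H₁°` and whose second marginal lies in `H₂°`. -/
def marginalSet (H₁ : Set (Ω₁ → ℝ≥0∞)) (H₂ : Set (Ω₂ → ℝ≥0∞)) :
    Set (Measure (Ω₁ × Ω₂)) :=
  {μ | IsFiniteMeasure μ ∧ μ.map Prod.fst ∈ polar H₁ ∧ μ.map Prod.snd ∈ polar H₂}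

/-- The transport functional
`π(f) = sup{⟨f,μ⟩ : μ ∈ ca₊(Ω₁ × Ω₂), μ₁ ∈ H₁°, μ₂ ∈ H₂°}`. -/
noncomputable def transportPrice (H₁ : Set (Ω₁ → ℝ≥0∞)) (H₂ : Set (Ω₂ → ℝ≥0∞))
    (f : Ω₁ × Ω₂ → ℝ≥0∞) : ℝ≥0∞ :=
  sSup {x : ℝ≥0∞ | ∃ μ ∈ marginalSet H₁ H₂, x = ∫⁻ ω, f ω ∂μ}

end Transport

section Duality

open Set Topology
open scoped CompactlySupported

/-! ### Almost everywhere convergent selections -/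

/-- Quantitative strict convexity of `z ↦ (1 + z)⁻¹` on `[0,∞]`: the midpoint defect controls
the squared distance of the values. -/
theorem inv_one_add_midpoint (x y : ℝ≥0∞) :
    ‖((1 + x)⁻¹).toReal - ((1 + y)⁻¹).toReal‖ₑ ^ (2 : ℝ) + 4 * (1 + (2⁻¹ * x + 2⁻¹ * y))⁻¹
      ≤ 2 * ((1 + x)⁻¹ + (1 + y)⁻¹) := by
  have hle1 : ∀ z : ℝ≥0∞, (1 + z)⁻¹ ≤ 1 := fun z => by simp
  have key : ∀ r : ℝ, ‖r‖ₑ ^ (2 : ℝ) = ENNReal.ofReal (r ^ 2) := fun r => by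
    rw [← sq_abs, ENNReal.ofReal_pow (abs_nonneg _), Real.enorm_eq_ofReal_abs]
    norm_num
  have htop : ∀ a : ℝ≥0∞, a ≤ 1 → ENNReal.ofReal (a.toReal ^ 2) ≤ 2 * a := by
    intro a ha
    have ha' : a ≠ ⊤ := (ha.trans_lt one_lt_top).ne
    rw [ENNReal.ofReal_pow toReal_nonneg, ENNReal.ofReal_toReal ha', sq]
    gcongr
    exact ha.trans (by norm_num)
  rw [key]
  rcases eq_or_ne x ⊤ with rfl | hx
  · simpa using htop _ (hle1 y)
  rcases eq_or_ne y ⊤ with rfl | hy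
  · simpa using htop _ (hle1 x)
  lift x to ℝ≥0 using hx
  lift y to ℝ≥0 using hy
  have e : ∀ z : ℝ≥0, (1 + (z : ℝ≥0∞))⁻¹ = ENNReal.ofReal ((1 + (z : ℝ))⁻¹) := fun z => by
    rw [ENNReal.ofReal_inv_of_pos (by positivity), ENNReal.ofReal_add (by norm_num)
      (NNReal.coe_nonneg z), ENNReal.ofReal_one, ENNReal.ofReal_coe_nnreal]
  have e2 : (2⁻¹ * (x : ℝ≥0∞) + 2⁻¹ * y) = ((2⁻¹ * x + 2⁻¹ * y : ℝ≥0) : ℝ≥0∞) := by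
    rw [ENNReal.coe_add, ENNReal.coe_mul, ENNReal.coe_mul, ENNReal.coe_inv (by norm_num)]
    norm_num
  rw [e2, e, e, e, ENNReal.toReal_ofReal (by positivity), ENNReal.toReal_ofReal (by positivity)]
  have h4 : (4 : ℝ≥0∞) = ENNReal.ofReal 4 := by norm_num
  have h2 : (2 : ℝ≥0∞) = ENNReal.ofReal 2 := by norm_num
  rw [h4, h2, ← ENNReal.ofReal_mul (by norm_num), ← ENNReal.ofReal_add (by positivity)
    (by positivity), ← ENNReal.ofReal_add (by positivity) (by positivity),
    ← ENNReal.ofReal_mul (by norm_num)]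
  apply ENNReal.ofReal_le_ofReal
  have hx : (0 : ℝ) ≤ (x : ℝ) := NNReal.coe_nonneg x
  have hy : (0 : ℝ) ≤ (y : ℝ) := NNReal.coe_nonneg y
  push_cast
  generalize (x : ℝ) = x at *
  generalize (y : ℝ) = y at *
  have h1 : 0 < 1 + x := by positivity
  have h2 : 0 < 1 + y := by positivity
  have h3 : 0 < 1 + (2⁻¹ * x + 2⁻¹ * y) := by positivity
  have : 2 * ((1 + x)⁻¹ + (1 + y)⁻¹) - (((1 + x)⁻¹ - (1 + y)⁻¹) ^ 2
      + 4 * (1 + (2⁻¹ * x + 2⁻¹ * y))⁻¹)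
      = (x - y) ^ 2 * ((1 + x) * (1 + y) - (1 + (2⁻¹ * x + 2⁻¹ * y))) /
        ((1 + x) ^ 2 * (1 + y) ^ 2 * (1 + (2⁻¹ * x + 2⁻¹ * y))) := by
    have h1 := h1.ne'
    have h2 := h2.ne'
    have h3 := h3.ne'
    field_simp
    ring
  have h5 : 0 ≤ (x - y) ^ 2 * ((1 + x) * (1 + y) - (1 + (2⁻¹ * x + 2⁻¹ * y))) /
        ((1 + x) ^ 2 * (1 + y) ^ 2 * (1 + (2⁻¹ * x + 2⁻¹ * y))) := by
    have : 0 ≤ (1 + x) * (1 + y) - (1 + (2⁻¹ * x + 2⁻¹ * y)) := by nlinarith [mul_nonneg hx hy]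
    positivity
  linarith

theorem liminf_add_le_limsup_add_liminf (u v : ℕ → ℝ≥0∞) :
    liminf (fun n => u n + v n) atTop ≤ limsup u atTop + liminf v atTop := by
  rw [limsup_eq_iInf_iSup_of_nat, ENNReal.iInf_add]
  refine le_iInf fun n => ?_
  have hmono : Monotone fun z : ℝ≥0∞ => (⨆ i ≥ n, u i) + z := fun _ _ h => add_le_add_right h _
  rw [hmono.map_liminf_of_continuousAt v (by fun_prop)]
  refine liminf_le_liminf (eventually_atTop.2 ⟨n, fun k hk => ?_⟩)
  exact add_le_add_left (le_iSup₂ (f := fun i (_ : i ≥ n) => u i) k hk) _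

theorem liminf_add_liminf_le (u v : ℕ → ℝ≥0∞) :
    liminf u atTop + liminf v atTop ≤ liminf (fun n => u n + v n) atTop := by
  simp only [liminf_eq_iSup_iInf_of_nat]
  rw [ENNReal.iSup_add_iSup_of_monotone
    (fun _ _ h => biInf_mono fun _ hi => h.trans hi) (fun _ _ h => biInf_mono fun _ hi => h.trans hi)]
  refine iSup_mono fun n => le_iInf₂ fun i hi => ?_
  exact add_le_add (iInf₂_le i hi) (iInf₂_le i hi)

/-- A Komlós-type selection principle: from decreasing, midpoint-closed sets of `[0,∞]`-valued
functions one can choose `g n ∈ S n` converging almost everywhere in `[0,∞]`. The `g n` nearly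
minimise the strictly convex functional `g ↦ ∫ (1 + g)⁻¹ dν`, which makes `(1 + g n)⁻¹` a Cauchy
sequence in `L²(ν)` with geometric rate. -/
theorem komlos {X : Type*} [MeasurableSpace X] (ν : Measure X) [IsFiniteMeasure ν]
    (S : ℕ → Set (X → ℝ≥0∞)) (hanti : Antitone S) (hne : ∀ n, (S n).Nonempty)
    (hmeas : ∀ n, ∀ g ∈ S n, Measurable g)
    (hmid : ∀ n, ∀ g ∈ S n, ∀ h ∈ S n, (fun x => 2⁻¹ * g x + 2⁻¹ * h x) ∈ S n) :
    ∃ g : ℕ → X → ℝ≥0∞, (∀ n, g n ∈ S n) ∧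
      ∀ᵐ x ∂ν, ∃ l, Tendsto (fun n => g n x) atTop (𝓝 l) := by
  set J : (X → ℝ≥0∞) → ℝ≥0∞ := fun g => ∫⁻ x, (1 + g x)⁻¹ ∂ν with hJ
  have hJle : ∀ g, J g ≤ ν univ := fun g => by
    calc J g ≤ ∫⁻ _, 1 ∂ν := lintegral_mono fun x => by simp
      _ = ν univ := by simp
  set s : ℕ → ℝ≥0∞ := fun n => ⨅ g ∈ S n, J g with hs
  have hsmono : Monotone s := fun n m hnm => biInf_mono fun g hg => hanti hnm hg
  set σ : ℝ≥0∞ := ⨆ n, s n with hσ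
  have hσtop : σ ≠ ⊤ := by
    refine ((iSup_le fun n => ?_).trans_lt (measure_lt_top ν univ)).ne
    obtain ⟨g, hg⟩ := hne n
    exact (biInf_le _ hg).trans (hJle g)
  -- `8 * δ N < (2⁻¹ ^ N) ^ 2`, which is the rate required for almost everywhere convergence below.
  set δ : ℕ → ℝ≥0∞ := fun n => 4⁻¹ ^ n * 16⁻¹ with hδ
  have hδ0 : ∀ n, δ n ≠ 0 := fun n => by simp [hδ]
  have hδanti : Antitone δ := fun n m hnm => by
    simp only [hδ]
    gcongr ?_ * _
    exact pow_le_pow_right_of_le_one' (by norm_num) hnm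
  have hm : ∀ n, ∃ m, n ≤ m ∧ σ ≤ s m + δ n := by
    intro n
    by_cases h0 : σ = 0
    · exact ⟨n, le_rfl, by simp [h0]⟩
    obtain ⟨m, hm⟩ := lt_iSup_iff.1 (ENNReal.sub_lt_self hσtop h0 (hδ0 n))
    refine ⟨max m n, le_max_right _ _, ?_⟩
    exact tsub_le_iff_right.1 (hm.le.trans (hsmono (le_max_left _ _)))
  choose m hnm hm using hm
  have hg : ∀ n, ∃ g ∈ S (m n), J g ≤ σ + δ n := by
    intro n
    have h1 : s (m n) < σ + δ n :=
      (le_iSup s (m n)).trans_lt (ENNReal.lt_add_right hσtop (hδ0 n))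
    obtain ⟨g, hg, h⟩ : ∃ g ∈ S (m n), J g < σ + δ n := by
      simpa [hs, iInf_lt_iff] using h1
    exact ⟨g, hg, h.le⟩
  choose g hgS hgJ using hg
  have hgm : ∀ n, Measurable (g n) := fun n => hmeas _ _ (hgS n)
  refine ⟨g, fun n => hanti (hnm n) (hgS n), ?_⟩
  have hcau : ∀ N n k : ℕ, N ≤ n → N ≤ k →
      ∫⁻ x, ‖((1 + g n x)⁻¹).toReal - ((1 + g k x)⁻¹).toReal‖ₑ ^ (2 : ℝ) ∂ν ≤ 8 * δ N := by
    intro N n k hn hk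
    have hmidJ : σ ≤ J (fun x => 2⁻¹ * g n x + 2⁻¹ * g k x) + δ N := by
      have h1 : s (min (m n) (m k)) ≤ J (fun x => 2⁻¹ * g n x + 2⁻¹ * g k x) :=
        biInf_le _ (hmid _ _ (hanti (min_le_left _ _) (hgS n)) _
          (hanti (min_le_right _ _) (hgS k)))
      have h2 : σ ≤ s (min (m n) (m k)) + δ N := by
        rcases min_choice (m n) (m k) with h | h <;> rw [h]
        · exact (hm n).trans (by gcongr; exact hδanti hn)
        · exact (hm k).trans (by gcongr; exact hδanti hk)
      exact h2.trans (by gcongr)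
    have hint : ∫⁻ x, ‖((1 + g n x)⁻¹).toReal - ((1 + g k x)⁻¹).toReal‖ₑ ^ (2 : ℝ) ∂ν
        + 4 * J (fun x => 2⁻¹ * g n x + 2⁻¹ * g k x) ≤ 2 * (J (g n) + J (g k)) := by
      simp only [hJ]
      have := hgm n
      have := hgm k
      rw [← lintegral_const_mul _ (by fun_prop), ← lintegral_add_right _ (by fun_prop),
        ← lintegral_add_right _ (by fun_prop), ← lintegral_const_mul _ (by fun_prop)]
      exact lintegral_mono fun x => inv_one_add_midpoint _ _
    have h4 : (4 : ℝ≥0∞) * σ ≠ ⊤ := ENNReal.mul_ne_top (by norm_num) hσtop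
    rw [← ENNReal.add_le_add_iff_right h4]
    calc _ ≤ ∫⁻ x, ‖((1 + g n x)⁻¹).toReal - ((1 + g k x)⁻¹).toReal‖ₑ ^ (2 : ℝ) ∂ν
          + 4 * (J (fun x => 2⁻¹ * g n x + 2⁻¹ * g k x) + δ N) := by gcongr
      _ ≤ 2 * (J (g n) + J (g k)) + 4 * δ N := by
          rw [mul_add, ← add_assoc]; gcongr
      _ ≤ 2 * ((σ + δ N) + (σ + δ N)) + 4 * δ N := by
          gcongr
          · exact (hgJ n).trans (by gcongr; exact hδanti hn)
          · exact (hgJ k).trans (by gcongr; exact hδanti hk)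
      _ = 8 * δ N + 4 * σ := by ring
  have hconv : ∀ᵐ x ∂ν, ∃ l : ℝ,
      Tendsto (fun n => ((1 + g n x)⁻¹).toReal) atTop (𝓝 l) := by
    refine Lp.ae_tendsto_of_cauchy_eLpNorm' (p := 2) (B := fun n => 2⁻¹ ^ n)
      (f := fun n x => ((1 + g n x)⁻¹).toReal) ?_ (by norm_num) ?_ ?_
    · intro n
      have := hgm n
      exact Measurable.aestronglyMeasurable (by fun_prop)
    · rw [ENNReal.tsum_geometric]; simp
    · intro N n k hn hk
      rw [eLpNorm', one_div, ENNReal.rpow_inv_lt_iff (by norm_num)]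
      refine (hcau N n k hn hk).trans_lt ?_
      rw [ENNReal.rpow_two, ← pow_mul, mul_comm N 2, pow_mul]
      simp only [hδ]
      have h16 : (8 : ℝ≥0∞) * 16⁻¹ < 1 := by
        rw [← div_eq_mul_inv, ENNReal.div_lt_iff (by norm_num) (by norm_num)]; norm_num
      have h4 : ((2 : ℝ≥0∞)⁻¹ ^ 2) = 4⁻¹ := by
        rw [← ENNReal.inv_pow]; norm_num
      rw [h4]
      calc (8 : ℝ≥0∞) * (4⁻¹ ^ N * 16⁻¹) = 4⁻¹ ^ N * (8 * 16⁻¹) := by ring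
        _ < 4⁻¹ ^ N * 1 := by
          rw [ENNReal.mul_lt_mul_iff_right (by simp) (by simp)]
          exact h16
        _ = _ := mul_one _
  filter_upwards [hconv] with x ⟨l, hl⟩
  have h1 : Tendsto (fun n => (1 + g n x)⁻¹) atTop (𝓝 (ENNReal.ofReal l)) := by
    refine (ENNReal.tendsto_ofReal hl).congr fun n => ?_
    rw [ENNReal.ofReal_toReal]
    simp
  have h2 := (tendsto_inv_iff.2 h1)
  simp only [inv_inv] at h2
  have h3 := ENNReal.Tendsto.sub h2 (tendsto_const_nhds (x := (1 : ℝ≥0∞))) (Or.inr (by simp))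
  refine ⟨_, h3.congr fun n => ?_⟩
  exact ENNReal.add_sub_cancel_left (by simp)

/-! ### Hedgeability and its stability under increasing limits -/

/-- `Hedge Q₁ Q₂ f c`: the claim `f` on `X × Y` is dominated everywhere by some measurable
`f₁ ⊕ f₂` whose cost `⟨f₁,μ₁⟩ + ⟨f₂,μ₂⟩` is at most `c` for all `μ₁ ∈ Q₁` and `μ₂ ∈ Q₂`. With
`Qᵢ = Hᵢ°` the cost bound says `π₁(f₁) + π₂(f₂) ≤ c`. -/
def Hedge {X Y : Type*} [MeasurableSpace X] [MeasurableSpace Y]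
    (Q₁ : Set (Measure X)) (Q₂ : Set (Measure Y)) (f : X × Y → ℝ≥0∞) (c : ℝ≥0∞) : Prop :=
  ∃ (f₁ : X → ℝ≥0∞) (f₂ : Y → ℝ≥0∞), Measurable f₁ ∧ Measurable f₂ ∧
    (∀ ω, f ω ≤ f₁ ω.1 + f₂ ω.2) ∧
    ∀ μ₁ ∈ Q₁, ∀ μ₂ ∈ Q₂, ∫⁻ x, f₁ x ∂μ₁ + ∫⁻ y, f₂ y ∂μ₂ ≤ c

section Hedge

variable {X Y : Type*} [MeasurableSpace X] [MeasurableSpace Y]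

theorem Hedge.mono {Q₁ Q₁' : Set (Measure X)} {Q₂ Q₂' : Set (Measure Y)}
    {f g : X × Y → ℝ≥0∞} {c : ℝ≥0∞} (h : Hedge Q₁ Q₂ f c) (h₁ : Q₁' ⊆ Q₁) (h₂ : Q₂' ⊆ Q₂)
    (hfg : ∀ ω, g ω ≤ f ω) : Hedge Q₁' Q₂' g c := by
  obtain ⟨f₁, f₂, m₁, m₂, hle, hint⟩ := h
  exact ⟨f₁, f₂, m₁, m₂, fun ω => (hfg ω).trans (hle ω),
    fun μ₁ hμ₁ μ₂ hμ₂ => hint μ₁ (h₁ hμ₁) μ₂ (h₂ hμ₂)⟩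

theorem hedge_convex {Q₁ : Set (Measure X)} {Q₂ : Set (Measure Y)} {f₁ g₁ : X → ℝ≥0∞}
    {f₂ g₂ : Y → ℝ≥0∞} {c a b : ℝ≥0∞} (hab : a + b = 1)
    (mf₁ : Measurable f₁) (mf₂ : Measurable f₂) (mg₁ : Measurable g₁) (mg₂ : Measurable g₂)
    (hf : ∀ μ₁ ∈ Q₁, ∀ μ₂ ∈ Q₂, ∫⁻ x, f₁ x ∂μ₁ + ∫⁻ y, f₂ y ∂μ₂ ≤ c)
    (hg : ∀ μ₁ ∈ Q₁, ∀ μ₂ ∈ Q₂, ∫⁻ x, g₁ x ∂μ₁ + ∫⁻ y, g₂ y ∂μ₂ ≤ c) :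
    ∀ μ₁ ∈ Q₁, ∀ μ₂ ∈ Q₂,
      ∫⁻ x, (a * f₁ x + b * g₁ x) ∂μ₁ + ∫⁻ y, (a * f₂ y + b * g₂ y) ∂μ₂ ≤ c := by
  intro μ₁ h₁ μ₂ h₂
  rw [lintegral_add_left (by fun_prop), lintegral_add_left (by fun_prop),
    lintegral_const_mul _ mf₁, lintegral_const_mul _ mf₂, lintegral_const_mul _ mg₁,
    lintegral_const_mul _ mg₂]
  calc _ = a * (∫⁻ x, f₁ x ∂μ₁ + ∫⁻ y, f₂ y ∂μ₂) + b * (∫⁻ x, g₁ x ∂μ₁ + ∫⁻ y, g₂ y ∂μ₂) := by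
        ring
    _ ≤ a * c + b * c := by gcongr <;> [exact hf _ h₁ _ h₂; exact hg _ h₁ _ h₂]
    _ = c := by rw [← add_mul, hab, one_mul]

theorem Hedge.convex {Q₁ : Set (Measure X)} {Q₂ : Set (Measure Y)} {f g : X × Y → ℝ≥0∞}
    {c a b : ℝ≥0∞} (hab : a + b = 1) (hf : Hedge Q₁ Q₂ f c) (hg : Hedge Q₁ Q₂ g c) :
    Hedge Q₁ Q₂ (fun ω => a * f ω + b * g ω) c := by
  obtain ⟨f₁, f₂, mf₁, mf₂, hlef, hintf⟩ := hf
  obtain ⟨g₁, g₂, mg₁, mg₂, hleg, hintg⟩ := hg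
  refine ⟨fun x => a * f₁ x + b * g₁ x, fun y => a * f₂ y + b * g₂ y, by fun_prop, by fun_prop,
    fun ω => ?_, hedge_convex hab mf₁ mf₂ mg₁ mg₂ hintf hintg⟩
  calc a * f ω + b * g ω ≤ a * (f₁ ω.1 + f₂ ω.2) + b * (g₁ ω.1 + g₂ ω.2) := by
        gcongr <;> [exact hlef ω; exact hleg ω]
    _ = _ := by ring

/-- Hedgeability at cost `c` is stable under increasing limits, of the claim and of the sets of
measures alike. The first components of the hedges can be chosen `ν`-almost everywhere convergent
by `komlos`; taking their `limsup` and the `liminf` of the second components preserves domination at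
*every* point, while `limsup = liminf` almost everywhere lets Fatou's lemma bound the cost. -/
theorem Hedge.iSup (ν : Measure X) [IsFiniteMeasure ν] {Q₁ : ℕ → Set (Measure X)}
    {Q₂ : ℕ → Set (Measure Y)} (hQ₁ : Monotone Q₁) (hQ₂ : Monotone Q₂)
    (hν : ∀ n, ∀ μ ∈ Q₁ n, μ ≪ ν) {f : ℕ → X × Y → ℝ≥0∞} (hf : Monotone f) {c : ℝ≥0∞}
    (h : ∀ n, Hedge (Q₁ n) (Q₂ n) (f n) c) :
    Hedge (⋃ n, Q₁ n) (⋃ n, Q₂ n) (fun ω => ⨆ n, f n ω) c := by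
  set S : ℕ → Set (X → ℝ≥0∞) := fun n => {f₁ | Measurable f₁ ∧ ∃ f₂ : Y → ℝ≥0∞,
    Measurable f₂ ∧ (∀ ω, f n ω ≤ f₁ ω.1 + f₂ ω.2) ∧
    ∀ μ₁ ∈ Q₁ n, ∀ μ₂ ∈ Q₂ n, ∫⁻ x, f₁ x ∂μ₁ + ∫⁻ y, f₂ y ∂μ₂ ≤ c} with hS
  obtain ⟨g, hgS, hgconv⟩ := komlos ν S
    (by
      rintro n m hnm f₁ ⟨m₁, f₂, m₂, hle, hint⟩
      exact ⟨m₁, f₂, m₂, fun ω => (hf hnm ω).trans (hle ω),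
        fun μ₁ h₁ μ₂ h₂ => hint μ₁ (hQ₁ hnm h₁) μ₂ (hQ₂ hnm h₂)⟩)
    (by
      intro n
      obtain ⟨f₁, f₂, m₁, m₂, hle, hint⟩ := h n
      exact ⟨f₁, m₁, f₂, m₂, hle, hint⟩)
    (fun n g hg => hg.1)
    (by
      rintro n f₁ ⟨mf₁, f₂, mf₂, hlef, hintf⟩ g₁ ⟨mg₁, g₂, mg₂, hleg, hintg⟩
      refine ⟨by fun_prop, fun y => 2⁻¹ * f₂ y + 2⁻¹ * g₂ y, by fun_prop, fun ω => ?_,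
        hedge_convex ENNReal.inv_two_add_inv_two mf₁ mf₂ mg₁ mg₂ hintf hintg⟩
      calc f n ω = (2⁻¹ + 2⁻¹) * f n ω := by rw [ENNReal.inv_two_add_inv_two, one_mul]
        _ = 2⁻¹ * f n ω + 2⁻¹ * f n ω := by ring
        _ ≤ 2⁻¹ * (f₁ ω.1 + f₂ ω.2) + 2⁻¹ * (g₁ ω.1 + g₂ ω.2) := by
            gcongr <;> [exact hlef ω; exact hleg ω]
        _ = _ := by ring)
  choose hg f₂ hf₂ hle hint using hgS
  refine ⟨fun x => limsup (fun n => g n x) atTop, fun y => liminf (fun n => f₂ n y) atTop,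
    .limsup hg, .liminf hf₂, fun ω => ?_, ?_⟩
  · refine iSup_le fun n => ?_
    calc f n ω ≤ liminf (fun k => g k ω.1 + f₂ k ω.2) atTop :=
          le_liminf_of_le (by isBoundedDefault) (eventually_atTop.2 ⟨n, fun k hk =>
            (hf hk ω).trans (hle k ω)⟩)
      _ ≤ _ := by
        exact liminf_add_le_limsup_add_liminf _ _
  · intro μ₁ h₁ μ₂ h₂
    obtain ⟨n₁, h₁⟩ := mem_iUnion.1 h₁
    obtain ⟨n₂, h₂⟩ := mem_iUnion.1 h₂
    have hlim : ∫⁻ x, limsup (fun n => g n x) atTop ∂μ₁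
        = ∫⁻ x, liminf (fun n => g n x) atTop ∂μ₁ := by
      refine lintegral_congr_ae ?_
      filter_upwards [(hν _ _ h₁).ae_le hgconv] with x ⟨l, hl⟩
      rw [hl.limsup_eq, hl.liminf_eq]
    rw [hlim]
    calc _ ≤ liminf (fun n => ∫⁻ x, g n x ∂μ₁) atTop + liminf (fun n => ∫⁻ y, f₂ n y ∂μ₂) atTop :=
          add_le_add (lintegral_liminf_le hg) (lintegral_liminf_le hf₂)
      _ ≤ liminf (fun n => ∫⁻ x, g n x ∂μ₁ + ∫⁻ y, f₂ n y ∂μ₂) atTop :=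
          liminf_add_liminf_le _ _
      _ ≤ c := by
          refine liminf_le_of_frequently_le' (Eventually.frequently ?_)
          filter_upwards [eventually_ge_atTop n₁, eventually_ge_atTop n₂] with k hk₁ hk₂
          exact hint k μ₁ (hQ₁ hk₁ h₁) μ₂ (hQ₂ hk₂ h₂)

end Hedge

/-! ### Separation on compact spaces -/

/-- Separation of an open convex set `S` of continuous functions containing the negative cone
from a convex set `D`, with the separating functional represented by a measure `μ`. The
normalisation is such that `∫ G dμ ≥ c` on `D`, whereas `∫ u dμ ≤ 1` as soon as `r • u ∈ S` for all
`r ∈ [0,c)`. -/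
theorem exists_measure_of_separation {Z : Type*} [MetricSpace Z] [CompactSpace Z]
    [MeasurableSpace Z] [BorelSpace Z] {S D : Set C(Z, ℝ)} (hSc : Convex ℝ S) (hSo : IsOpen S)
    (hD : Convex ℝ D) (hSD : Disjoint S D) (hneg : ∀ f : C(Z, ℝ), 0 ≤ f → -f ∈ S)
    {c : ℝ} (hc : 0 < c) :
    ∃ μ : Measure Z, IsFiniteMeasure μ ∧
      (∀ u : C(Z, ℝ), (∀ r : ℝ, 0 ≤ r → r < c → r • u ∈ S) → ∫ z, u z ∂μ ≤ 1) ∧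
      ∀ G ∈ D, c ≤ ∫ z, G z ∂μ := by
  obtain ⟨l, s, hlS, hlD⟩ := geometric_hahn_banach_open hSc hSo hD hSD
  have hs : 0 < s := by simpa using hlS _ (hneg 0 le_rfl)
  have hlpos : ∀ f : C(Z, ℝ), 0 ≤ f → 0 ≤ l f := by
    intro f hf
    by_contra! hlt
    obtain ⟨n, hn⟩ := exists_nat_gt (s / -l f)
    have h1 := hlS _ (hneg ((n : ℝ) • f) (smul_nonneg n.cast_nonneg hf))
    rw [div_lt_iff₀ (by linarith)] at hn
    simp only [map_neg, map_smul, smul_eq_mul] at h1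
    linarith
  let Λ : C_c(Z, ℝ) →ₚ[ℝ] ℝ := PositiveLinearMap.mk₀
    { toFun := fun f => c / s * l (f : C(Z, ℝ))
      map_add' := fun f g => by
        rw [← mul_add, ← map_add]; rfl
      map_smul' := fun a f => by
        rw [RingHom.id_apply, smul_eq_mul, mul_left_comm, ← smul_eq_mul a, ← map_smul]; rfl }
    (fun f hf => mul_nonneg (by positivity) (hlpos _ hf))
  have hΛ : ∀ u : C(Z, ℝ), ∫ z, u z ∂(RealRMK.rieszMeasure Λ) = c / s * l u := fun u =>
    RealRMK.integral_rieszMeasure Λ (CompactlySupportedContinuousMap.continuousMapEquiv u)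
  refine ⟨RealRMK.rieszMeasure Λ, inferInstance, fun u hu => ?_, fun G hG => ?_⟩
  · rw [hΛ]
    have h1 : ∀ r : ℝ, 0 ≤ r → r < c → r * l u ≤ s := fun r h0 h1 => by
      simpa using (hlS _ (hu r h0 h1)).le
    have h2 : c * l u ≤ s := by
      by_contra! h
      have hlu : 0 < l u := by
        by_contra! h3
        nlinarith
      have h4 : s / l u < c := by rwa [div_lt_iff₀ hlu]
      have h5 := h1 ((s / l u + c) / 2) (by positivity) (by linarith)
      have h6 : s / l u * l u = s := div_mul_cancel₀ _ hlu.ne'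
      nlinarith
    rw [div_mul_eq_mul_div, div_le_one hs]
    exact h2
  · rw [hΛ, div_mul_eq_mul_div, le_div_iff₀ hs]
    exact mul_le_mul_of_nonneg_left (hlD G hG) hc.le

theorem IsCb.continuous_toReal {W : Type*} [TopologicalSpace W] {h : W → ℝ≥0∞} (hh : IsCb h) :
    Continuous (fun w => (h w).toReal) := by
  obtain ⟨hcont, C, hC⟩ := hh
  exact ENNReal.continuousOn_toReal.comp_continuous hcont
    fun x => ((hC x).trans_lt ENNReal.coe_lt_top).ne

theorem IsCb.ofReal_toReal {W : Type*} [TopologicalSpace W] {h : W → ℝ≥0∞} (hh : IsCb h) (w : W) :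
    ENNReal.ofReal (h w).toReal = h w := by
  obtain ⟨hcont, C, hC⟩ := hh
  exact ENNReal.ofReal_toReal ((hC w).trans_lt ENNReal.coe_lt_top).ne

section Compact

variable {X Y : Type*} [MetricSpace X] [CompactSpace X] [MeasurableSpace X] [BorelSpace X]
  [MetricSpace Y] [CompactSpace Y] [MeasurableSpace Y] [BorelSpace Y]
  {A₁ : Set (X → ℝ≥0∞)} {A₂ : Set (Y → ℝ≥0∞)}

/-- If no continuous function lying strictly above the points of `T` can be hedged at cost `c`,
then some measure with marginals in the polars of `A₁` and `A₂` gives each of these functions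
integral at least `c`. The bound `k` on the masses in `polar A₁` makes adding a small constant to a
hedge cheap. -/
theorem exists_measure_of_not_hedge (hA₁ : ∀ h ∈ A₁, IsCb h) (hA₂ : ∀ h ∈ A₂, IsCb h)
    {k : ℝ} (hk : 0 < k) (hk₁ : ∀ μ ∈ polar A₁, μ univ ≤ ENNReal.ofReal k)
    {c : ℝ} (hc : 0 < c) (T : Set ((X × Y) × ℝ))
    (hT : ∀ G : C(X × Y, ℝ), (∀ p ∈ T, p.2 < G p.1) →
      ¬ Hedge (polar A₁) (polar A₂) (fun ω => ENNReal.ofReal (G ω)) (ENNReal.ofReal c)) :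
    ∃ μ : Measure (X × Y), IsFiniteMeasure μ ∧ μ.map Prod.fst ∈ polar A₁ ∧
      μ.map Prod.snd ∈ polar A₂ ∧ ∀ G : C(X × Y, ℝ), (∀ p ∈ T, p.2 < G p.1) →
        ENNReal.ofReal c ≤ ∫⁻ ω, ENNReal.ofReal (G ω) ∂μ := by
  -- Demanding some room `ε` makes the set of hedgeable functions open.
  set S : Set C(X × Y, ℝ) := {u | ∃ ε : ℝ, 0 < ε ∧
    Hedge (polar A₁) (polar A₂) (fun ω => ENNReal.ofReal (u ω + ε)) (ENNReal.ofReal c)} with hS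
  set D : Set C(X × Y, ℝ) := {G | ∀ p ∈ T, p.2 < G p.1} with hDdef
  have hSc : Convex ℝ S := by
    rintro u ⟨ε, hε, hu⟩ v ⟨δ, hδ, hv⟩ a b ha hb hab
    refine ⟨a * ε + b * δ, ?_, ?_⟩
    · rcases ha.eq_or_lt with rfl | ha
      · have : b = 1 := by linarith
        subst this
        linarith
      · have := mul_pos ha hε
        have := mul_nonneg hb hδ.le
        linarith
    · refine (hu.convex (a := ENNReal.ofReal a) (b := ENNReal.ofReal b) ?_ hv).mono
        subset_rfl subset_rfl fun ω => ?_
      · rw [← ENNReal.ofReal_add ha hb, hab, ENNReal.ofReal_one]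
      · rw [← ENNReal.ofReal_mul ha, ← ENNReal.ofReal_mul hb]
        refine le_trans (le_of_eq ?_) ENNReal.ofReal_add_le
        congr 1
        simp
        ring
  have hSo : IsOpen S := by
    rw [Metric.isOpen_iff]
    rintro u ⟨ε, hε, hu⟩
    refine ⟨ε / 2, by positivity, fun v hv => ⟨ε / 2, by positivity, hu.mono subset_rfl subset_rfl
      fun ω => ENNReal.ofReal_le_ofReal ?_⟩⟩
    have h1 := (ContinuousMap.dist_apply_le_dist (f := v) (g := u) ω).trans_lt hv
    rw [Real.dist_eq, abs_lt] at h1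
    linarith
  have hD : Convex ℝ D := by
    intro G hG F hF a b ha hb hab p hp
    have h1 := hG p hp
    have h2 := hF p hp
    simp only [ContinuousMap.add_apply, ContinuousMap.smul_apply, smul_eq_mul]
    have h3 : p.2 = a * p.2 + b * p.2 := by rw [← add_mul, hab, one_mul]
    rcases ha.eq_or_lt with rfl | ha
    · have : b = 1 := by linarith
      subst this
      linarith
    · have := mul_lt_mul_of_pos_left h1 ha
      have := mul_le_mul_of_nonneg_left h2.le hb
      linarith
  have hSD : Disjoint S D := by
    rw [Set.disjoint_left]
    rintro u ⟨ε, hε, hu⟩ hD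
    exact hT u hD (hu.mono subset_rfl subset_rfl fun ω => ENNReal.ofReal_le_ofReal (by linarith))
  have hmem : ∀ (u : C(X × Y, ℝ)) (f₁ : X → ℝ≥0∞) (f₂ : Y → ℝ≥0∞) (r : ℝ), 0 ≤ r → r < c →
      Measurable f₁ → Measurable f₂ → (∀ ω, ENNReal.ofReal (u ω) ≤ f₁ ω.1 + f₂ ω.2) →
      (∀ μ₁ ∈ polar A₁, ∀ μ₂ ∈ polar A₂,
        ∫⁻ x, f₁ x ∂μ₁ + ∫⁻ y, f₂ y ∂μ₂ ≤ ENNReal.ofReal r) → u ∈ S := by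
    intro u f₁ f₂ r hr hrc hf₁ hf₂ hle hint
    have hε : 0 < (c - r) / k := div_pos (by linarith) hk
    refine ⟨(c - r) / k, hε, fun x => f₁ x + ENNReal.ofReal ((c - r) / k), f₂,
      hf₁.add_const _, hf₂, fun ω => ?_, fun μ₁ h₁ μ₂ h₂ => ?_⟩
    · refine ENNReal.ofReal_add_le.trans ?_
      rw [add_right_comm]
      exact add_le_add (hle ω) le_rfl
    · rw [lintegral_add_right _ measurable_const, lintegral_const, add_right_comm]
      calc _ ≤ ENNReal.ofReal r + ENNReal.ofReal ((c - r) / k) * ENNReal.ofReal k :=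
            add_le_add (hint μ₁ h₁ μ₂ h₂) (mul_le_mul_right (hk₁ μ₁ h₁) _)
        _ = ENNReal.ofReal c := by
            rw [← ENNReal.ofReal_mul hε.le, div_mul_cancel₀ _ hk.ne',
              ← ENNReal.ofReal_add hr (by linarith)]
            congr 1
            ring
  have hneg : ∀ f : C(X × Y, ℝ), 0 ≤ f → -f ∈ S := by
    intro f hf
    refine hmem _ 0 0 0 le_rfl hc measurable_zero measurable_zero (fun ω => ?_) (by simp)
    have : 0 ≤ f ω := hf ω
    simp [this]
  obtain ⟨μ, hμ, h1, h2⟩ := exists_measure_of_separation hSc hSo hD hSD hneg hc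
  have hint : ∀ u : C(X × Y, ℝ), Integrable u μ := fun u =>
    u.continuous.integrable_of_hasCompactSupport (HasCompactSupport.of_compactSpace u)
  have hkey : ∀ u : C(X × Y, ℝ), (∀ ω, 0 ≤ u ω) → (∀ r : ℝ, 0 ≤ r → r < c → r • u ∈ S) →
      ∫⁻ ω, ENNReal.ofReal (u ω) ∂μ ≤ 1 := by
    intro u hu h
    rw [← ofReal_integral_eq_lintegral_ofReal (hint u) (Eventually.of_forall hu)]
    simpa using ENNReal.ofReal_le_ofReal (h1 u h)
  refine ⟨μ, hμ, ⟨inferInstance, fun h hh => ?_⟩, ⟨inferInstance, fun h hh => ?_⟩, fun G hG => ?_⟩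
  · have hm : Measurable h := (hA₁ h hh).1.measurable
    rw [lintegral_map hm measurable_fst]
    have := hkey ⟨fun ω => (h ω.1).toReal, (IsCb.continuous_toReal (hA₁ h hh)).comp continuous_fst⟩
      (fun ω => ENNReal.toReal_nonneg) fun r hr hrc => by
        refine hmem _ (fun x => ENNReal.ofReal r * h x) 0 r hr hrc (hm.const_mul _)
          measurable_zero (fun ω => ?_) fun μ₁ h₁ μ₂ h₂ => ?_
        · simp [ENNReal.ofReal_mul hr, IsCb.ofReal_toReal (hA₁ h hh)]
        · rw [lintegral_const_mul _ hm]
          simpa using mul_le_mul_right (h₁.2 h hh) (ENNReal.ofReal r)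
    simpa [IsCb.ofReal_toReal (hA₁ h hh)] using this
  · have hm : Measurable h := (hA₂ h hh).1.measurable
    rw [lintegral_map hm measurable_snd]
    have := hkey ⟨fun ω => (h ω.2).toReal, (IsCb.continuous_toReal (hA₂ h hh)).comp continuous_snd⟩
      (fun ω => ENNReal.toReal_nonneg) fun r hr hrc => by
        refine hmem _ 0 (fun y => ENNReal.ofReal r * h y) r hr hrc measurable_zero
          (hm.const_mul _) (fun ω => ?_) fun μ₁ h₁ μ₂ h₂ => ?_
        · simp [ENNReal.ofReal_mul hr, IsCb.ofReal_toReal (hA₂ h hh)]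
        · rw [lintegral_const_mul _ hm]
          simpa using mul_le_mul_right (h₂.2 h hh) (ENNReal.ofReal r)
    simpa [IsCb.ofReal_toReal (hA₂ h hh)] using this
  · calc ENNReal.ofReal c ≤ ENNReal.ofReal (∫ z, G z ∂μ) := ENNReal.ofReal_le_ofReal (h2 G hG)
      _ ≤ ENNReal.ofReal (∫⁻ z, ENNReal.ofReal (G z) ∂μ).toReal := by
          apply ENNReal.ofReal_le_ofReal
          rw [integral_eq_lintegral_pos_part_sub_lintegral_neg_part (hint G)]
          exact sub_le_self _ ENNReal.toReal_nonneg
      _ ≤ _ := ENNReal.ofReal_toReal_le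

end Compact

/-! ### From continuous to Borel functions on compact spaces -/

/-- Compact approximation of a function whose subgraph is the continuous image of the Baire
space, in the spirit of Choquet's capacitability theorem. If `P` is inherited by smaller functions
and stable under increasing limits, and fails for the function with subgraph `range F`, then there
is a compact `T ⊆ range F` such that `P` fails for every continuous function strictly above `T`. -/
theorem exists_compact_of_analytic {Z : Type*} [TopologicalSpace Z] {F : (ℕ → ℕ) → Z × ℝ}
    (hF : Continuous F) {P : (Z → ℝ≥0∞) → Prop}
    (hPmono : ∀ f g : Z → ℝ≥0∞, (∀ z, f z ≤ g z) → P g → P f)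
    (hPsup : ∀ f : ℕ → Z → ℝ≥0∞, Monotone f → (∀ n, P (f n)) → P (fun z => ⨆ n, f n z))
    (hP : ¬ P (fun z => ⨆ (α : ℕ → ℕ) (_ : (F α).1 = z), ENNReal.ofReal (F α).2)) :
    ∃ T : Set (Z × ℝ), IsCompact T ∧ T ⊆ range F ∧ ∀ G : Z → ℝ, Continuous G →
      (∀ p ∈ T, p.2 < G p.1) → ¬ P (fun z => ENNReal.ofReal (G z)) := by
  set fC : Set (ℕ → ℕ) → Z → ℝ≥0∞ := fun C z =>
    ⨆ (α : ℕ → ℕ) (_ : α ∈ C) (_ : (F α).1 = z), ENNReal.ofReal (F α).2 with hfC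
  have hfC_mono : ∀ C D : Set (ℕ → ℕ), C ⊆ D → ∀ z, fC C z ≤ fC D z := fun C D h z =>
    iSup_mono fun α => iSup_mono' fun hα => ⟨h hα, le_rfl⟩
  have step : ∀ (C : {C // ¬ P (fC C)}) (n : ℕ), ∃ N : ℕ, ¬ P (fC (C.1 ∩ {α | α n ≤ N})) := by
    rintro ⟨C, hC⟩ n
    by_contra! h
    refine hC (hPmono _ _ (fun z => ?_) (hPsup (fun N => fC (C ∩ {α | α n ≤ N})) ?_ h))
    · refine iSup_le fun α => iSup_le fun hα => iSup_le fun hz => ?_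
      refine le_iSup_of_le (α n) ?_
      exact le_iSup_of_le α (le_iSup_of_le ⟨hα, le_refl (α n)⟩ (le_iSup_of_le hz le_rfl))
    · intro N M hNM z
      exact hfC_mono (C ∩ {α | α n ≤ N}) (C ∩ {α | α n ≤ M}) (fun α hα => ⟨hα.1,
        le_trans (show α n ≤ N from hα.2) hNM⟩) z
  choose b hb using step
  -- Successively bounding the coordinates by `N 0, N 1, …` preserves the failure of `P`.
  let C : ℕ → {C // ¬ P (fC C)} := fun n => Nat.rec (motive := fun _ => {C // ¬ P (fC C)}) ⟨univ, by simpa [hfC] using hP⟩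
    (fun n C => ⟨C.1 ∩ {α | α n ≤ b C n}, hb C n⟩) n
  let N : ℕ → ℕ := fun n => b (C n) n
  have hCN : ∀ n, {α : ℕ → ℕ | ∀ i < n, α i ≤ N i} ⊆ (C n).1 := by
    intro n
    induction n with
    | zero => exact fun _ _ => trivial
    | succ n ih =>
      exact fun α hα => ⟨ih fun i hi => hα i (hi.trans n.lt_succ_self), hα n n.lt_succ_self⟩
  have hK : IsCompact (Set.pi univ fun i => Set.Iic (N i)) :=
    isCompact_univ_pi fun i => (Set.finite_Iic _).isCompact
  refine ⟨F '' _, hK.image hF, image_subset_range _ _, fun G hG hT hPG => ?_⟩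
  have hW : IsOpen {α | (F α).2 < G (F α).1} :=
    isOpen_lt (continuous_snd.comp hF) (hG.comp (continuous_fst.comp hF))
  have hn : ∃ n, {α : ℕ → ℕ | ∀ i < n, α i ≤ N i} ⊆ {α | (F α).2 < G (F α).1} := by
    by_contra! h
    simp only [Set.not_subset] at h
    choose α hα hαW using h
    obtain ⟨β, hβ, φ, hφ, hlim⟩ := hK.tendsto_subseq
      (x := fun n i => min (α n i) (N i)) (fun n i _ => show min (α n i) (N i) ≤ N i from min_le_right _ _)
    -- Truncation changes no coordinate below `n`, so the untruncated sequence has the same limit.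
    have hlim' : Tendsto (fun n => α (φ n)) atTop (𝓝 β) := by
      rw [tendsto_pi_nhds] at hlim ⊢
      intro i
      refine (hlim i).congr' ?_
      filter_upwards [eventually_gt_atTop i] with n hn
      exact min_eq_left (hα (φ n) i (hn.trans_le (hφ.id_le n)))
    have : β ∈ {α | (F α).2 < G (F α).1}ᶜ :=
      hW.isClosed_compl.mem_of_tendsto hlim' (Eventually.of_forall fun n => hαW (φ n))
    exact this (hT _ ⟨β, hβ, rfl⟩)
  obtain ⟨n, hn⟩ := hn
  have hCn : ∀ α ∈ (C n).1, ∀ i < n, α i ≤ N i := by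
    clear hn
    induction n with
    | zero => simp
    | succ n ih =>
      intro α hα i hi
      rcases Nat.lt_succ_iff_lt_or_eq.1 hi with h | rfl
      · exact ih α hα.1 i h
      · exact hα.2
  refine (C n).2 (hPmono _ _ (fun z => ?_) hPG)
  refine iSup_le fun α => iSup_le fun hα => iSup_le fun hz => ?_
  subst hz
  exact ENNReal.ofReal_le_ofReal (hn (hCn α hα)).le

/-- If `T` is a compact part of the subgraph of `f`, then any lower bound for the integrals of the
continuous functions strictly above `T` is a lower bound for `∫ f dμ`. -/
theorem le_lintegral_of_compact {Z : Type*} [MetricSpace Z] [CompactSpace Z]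
    [MeasurableSpace Z] [BorelSpace Z] {T : Set (Z × ℝ)} (hT : IsCompact T) {f : Z → ℝ≥0∞}
    (hTf : ∀ p ∈ T, ENNReal.ofReal p.2 ≤ f p.1) (μ : Measure Z) [IsFiniteMeasure μ] {c : ℝ≥0∞}
    (hc : ∀ G : C(Z, ℝ), (∀ p ∈ T, p.2 < G p.1) → c ≤ ∫⁻ z, ENNReal.ofReal (G z) ∂μ) :
    c ≤ ∫⁻ z, f z ∂μ := by
  rcases T.eq_empty_or_nonempty with rfl | hne
  · have := hc 0 (by simp)
    simp at this
    simp [this]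
  have hcont : ∀ n : ℕ, Continuous fun q : Z × (Z × ℝ) => q.2.2 - n * dist q.1 q.2.1 := by
    intro n
    fun_prop
  -- The Lipschitz regularisations `z ↦ max_{(w,t) ∈ T} (t - n d(z,w))` decrease to a function `≤ f`.
  let G : ℕ → C(Z, ℝ) := fun n =>
    ⟨fun z => sSup ((fun p : Z × ℝ => p.2 - n * dist z p.1) '' T) + 1 / ((n : ℝ) + 1),
      (hT.continuous_sSup (f := fun z p => p.2 - n * dist z p.1)
        (hcont n)).add continuous_const⟩
  have hbdd : ∀ (n : ℕ) (z : Z), BddAbove ((fun p : Z × ℝ => p.2 - n * dist z p.1) '' T) :=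
    fun n z => (hT.image (by fun_prop)).bddAbove
  have hpos : ∀ n : ℕ, (0 : ℝ) < 1 / ((n : ℝ) + 1) := fun n => Nat.one_div_pos_of_nat
  have hGT : ∀ n, ∀ p ∈ T, p.2 < G n p.1 := by
    intro n p hp
    have h1 := le_csSup (hbdd n p.1) (mem_image_of_mem _ hp)
    have h2 := hpos n
    simp only [dist_self, mul_zero, sub_zero] at h1
    simp only [G, ContinuousMap.coe_mk]
    linarith
  have hanti : Antitone fun n z => ENNReal.ofReal (G n z) := by
    intro n m hnm z
    apply ENNReal.ofReal_le_ofReal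
    simp only [G, ContinuousMap.coe_mk]
    refine add_le_add (csSup_le (hne.image _) ?_) (Nat.one_div_le_one_div hnm)
    rintro _ ⟨p, hp, rfl⟩
    refine le_trans ?_ (le_csSup (hbdd n z) (mem_image_of_mem _ hp))
    have : (n : ℝ) ≤ m := by exact_mod_cast hnm
    have := mul_le_mul_of_nonneg_right this (dist_nonneg (x := z) (y := p.1))
    simp only
    linarith
  have hle : ∀ z, ⨅ n, ENNReal.ofReal (G n z) ≤ f z := by
    intro z
    by_contra! h
    obtain ⟨r, hr1, hr2⟩ := ENNReal.lt_iff_exists_nnreal_btwn.1 h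
    obtain ⟨s, hs1, hs2⟩ := ENNReal.lt_iff_exists_nnreal_btwn.1 hr1
    have hsr : (s : ℝ) < r := by exact_mod_cast hs2
    have hcover : T ⊆ ⋃ n : ℕ, {p : Z × ℝ | p.2 - n * dist z p.1 < s} := by
      intro p hp
      rw [mem_iUnion]
      by_cases hz : z = p.1
      · refine ⟨0, ?_⟩
        have h1 := (hTf p hp).trans_lt (hz ▸ hs1)
        rw [← ENNReal.ofReal_coe_nnreal] at h1
        have := lt_of_not_ge fun h => h1.not_ge (ENNReal.ofReal_le_ofReal h)
        simpa using this
      · obtain ⟨n, hn⟩ := exists_nat_gt ((p.2 - s) / dist z p.1)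
        rw [div_lt_iff₀ (dist_pos.2 hz)] at hn
        exact ⟨n, show p.2 - n * dist z p.1 < s by linarith⟩
    have hdir : Directed (· ⊆ ·) fun n : ℕ => {p : Z × ℝ | p.2 - n * dist z p.1 < s} := by
      refine directed_of_isDirected_le fun n m hnm p hp => ?_
      have h4 : p.2 - n * dist z p.1 < s := hp
      have h5 : (n : ℝ) ≤ m := by exact_mod_cast hnm
      have := mul_le_mul_of_nonneg_right h5 (dist_nonneg (x := z) (y := p.1))
      exact show p.2 - m * dist z p.1 < s by linarith
    obtain ⟨n, hn⟩ := hT.elim_directed_cover _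
      (fun n => isOpen_lt (by fun_prop) continuous_const) hcover hdir
    obtain ⟨m, hm⟩ := exists_nat_one_div_lt (sub_pos.2 hsr)
    have h1 : ENNReal.ofReal (G (max n m) z) ≤ r := by
      rw [← ENNReal.ofReal_coe_nnreal]
      apply ENNReal.ofReal_le_ofReal
      have h2 : 1 / ((max n m : ℕ) + 1 : ℝ) ≤ 1 / ((m : ℝ) + 1) :=
        Nat.one_div_le_one_div (le_max_right n m)
      have h3 : sSup ((fun p : Z × ℝ => p.2 - (max n m : ℕ) * dist z p.1) '' T) ≤ s := by
        refine csSup_le (hne.image _) ?_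
        rintro _ ⟨p, hp, rfl⟩
        have h4 : p.2 - n * dist z p.1 < s := hn hp
        have h5 : (n : ℝ) ≤ (max n m : ℕ) := by exact_mod_cast le_max_left n m
        have := mul_le_mul_of_nonneg_right h5 (dist_nonneg (x := z) (y := p.1))
        simp only
        linarith
      simp only [G, ContinuousMap.coe_mk]
      linarith
    exact absurd (hr2.trans_le (iInf_le _ (max n m))) (not_lt.2 h1)
  calc c ≤ ⨅ n, ∫⁻ z, ENNReal.ofReal (G n z) ∂μ := le_iInf fun n => hc (G n) (hGT n)
    _ = ∫⁻ z, ⨅ n, ENNReal.ofReal (G n z) ∂μ := by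
        refine (lintegral_iInf (fun n => (G n).continuous.measurable.ennreal_ofReal) hanti ?_).symm
        exact ((G 0).continuous.integrable_of_hasCompactSupport
          (HasCompactSupport.of_compactSpace _)).lintegral_lt_top.ne
    _ ≤ ∫⁻ z, f z ∂μ := lintegral_mono hle

/-- The duality on compact spaces for continuous test functions: a measurable claim that cannot
be hedged at cost `c` has integral at least `c` under some measure with admissible marginals. -/
theorem exists_measure_of_not_hedge_of_measurable {X Y : Type*}
    [MetricSpace X] [CompactSpace X] [MeasurableSpace X] [BorelSpace X]
    [MetricSpace Y] [CompactSpace Y] [MeasurableSpace Y] [BorelSpace Y]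
    {A₁ : Set (X → ℝ≥0∞)} {A₂ : Set (Y → ℝ≥0∞)}
    (hA₁ : ∀ h ∈ A₁, IsCb h) (hA₂ : ∀ h ∈ A₂, IsCb h)
    {k : ℝ} (hk : 0 < k) (hk₁ : ∀ μ ∈ polar A₁, μ univ ≤ ENNReal.ofReal k)
    (ν : Measure X) [IsFiniteMeasure ν] (hν : ∀ μ ∈ polar A₁, μ ≪ ν)
    {c : ℝ} (hc : 0 < c) {f : X × Y → ℝ≥0∞} (hf : Measurable f)
    (hnot : ¬ Hedge (polar A₁) (polar A₂) f (ENNReal.ofReal c)) :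
    ∃ μ : Measure (X × Y), IsFiniteMeasure μ ∧ μ.map Prod.fst ∈ polar A₁ ∧
      μ.map Prod.snd ∈ polar A₂ ∧ ENNReal.ofReal c ≤ ∫⁻ ω, f ω ∂μ := by
  have hE : AnalyticSet {p : (X × Y) × ℝ | ENNReal.ofReal p.2 ≤ f p.1} :=
    (measurableSet_le (by fun_prop) (by fun_prop)).analyticSet
  rw [AnalyticSet] at hE
  rcases hE with hE | ⟨F, hF, hrange⟩
  · have hempty : ∀ ω : X × Y, False := fun ω => by
      have : (ω, (0 : ℝ)) ∈ {p : (X × Y) × ℝ | ENNReal.ofReal p.2 ≤ f p.1} := by simp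
      rw [hE] at this
      exact this
    exact absurd ⟨0, 0, measurable_zero, measurable_zero, fun ω => (hempty ω).elim, by simp⟩ hnot
  have hfF : (fun z => ⨆ (α : ℕ → ℕ) (_ : (F α).1 = z), ENNReal.ofReal (F α).2) = f := by
    funext z
    apply le_antisymm
    · refine iSup_le fun α => iSup_le fun hα => ?_
      subst hα
      have : F α ∈ {p : (X × Y) × ℝ | ENNReal.ofReal p.2 ≤ f p.1} := hrange ▸ mem_range_self α
      exact this
    · refine ENNReal.le_of_forall_nnreal_lt fun r hr => ?_
      have : (z, (r : ℝ)) ∈ range F := by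
        rw [hrange]
        simpa using hr.le
      obtain ⟨α, hα⟩ := this
      refine le_iSup_of_le α (le_iSup_of_le (by rw [hα]) ?_)
      rw [hα]
      simp
  obtain ⟨T, hT, hTF, hTG⟩ := exists_compact_of_analytic hF
    (P := fun g => Hedge (polar A₁) (polar A₂) g (ENNReal.ofReal c))
    (fun f g hfg hg => hg.mono subset_rfl subset_rfl hfg)
    (fun g hg h => by
      have := Hedge.iSup ν (Q₁ := fun _ => polar A₁) (Q₂ := fun _ => polar A₂)
        monotone_const monotone_const (fun _ => hν) hg h
      rwa [iUnion_const, iUnion_const] at this)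
    (by rwa [hfF])
  obtain ⟨μ, hμ, h1, h2, h3⟩ := exists_measure_of_not_hedge hA₁ hA₂ hk hk₁ hc T
    fun G => hTG G G.continuous
  refine ⟨μ, hμ, h1, h2, le_lintegral_of_compact hT (fun p hp => ?_) μ h3⟩
  have : p ∈ {p : (X × Y) × ℝ | ENNReal.ofReal p.2 ≤ f p.1} := hrange ▸ hTF hp
  exact this

/-! ### Polars of regular sets and restriction to compact subsets -/

/-- For regular `H`, membership in the polar can be tested on the bounded continuous elements of
`H` alone. By the Vitali–Carathéodory theorem, upper semicontinuous minorants, which belong to `H` by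
monotonicity, exhaust the integral of each truncation of `h ∈ H`. -/
theorem mem_polar_of_isCb {Ω : Type*} [MetricSpace Ω] [MeasurableSpace Ω] [BorelSpace Ω]
    {H : Set (Ω → ℝ≥0∞)} (hmeas : ∀ f ∈ H, Measurable f) (hmono : MonotoneSet H)
    (hreg : RegularSet H) {μ : Measure Ω} [IsFiniteMeasure μ]
    (hμ : ∀ h ∈ H, IsCb h → ∫⁻ x, h x ∂μ ≤ 1) : μ ∈ polar H := by
  have hU : ∀ h ∈ H, IsUb h → ∫⁻ x, h x ∂μ ≤ 1 := by
    intro h hh hb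
    have h1 : ∫⁻ x, h x ∂μ ≤ sSup {x : ℝ≥0∞ | ∃ h ∈ H, IsUb h ∧ x = ∫⁻ ω, h ω ∂μ} :=
      le_sSup ⟨h, hh, hb, rfl⟩
    rw [hreg μ inferInstance] at h1
    refine h1.trans (sSup_le ?_)
    rintro _ ⟨g, hg, hgb, rfl⟩
    exact hμ g hg hgb
  refine ⟨inferInstance, fun h hh => ?_⟩
  have htrunc : ∀ N : ℕ, ∫⁻ x, min (h x) N ∂μ ≤ 1 := by
    intro N
    have hcoe : ∀ x, ((min (h x) N).toNNReal : ℝ≥0∞) = min (h x) N := fun x =>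
      ENNReal.coe_toNNReal ((min_le_right _ _).trans_lt (ENNReal.natCast_lt_top N)).ne
    have hfin : ∫⁻ x, ((min (h x) N).toNNReal : ℝ≥0∞) ∂μ ≠ ⊤ := by
      simp only [hcoe]
      refine ((lintegral_mono fun x => min_le_right (h x) (N : ℝ≥0∞)).trans_lt ?_).ne
      rw [lintegral_const]
      exact ENNReal.mul_lt_top (ENNReal.natCast_lt_top N) (measure_lt_top _ _)
    refine ENNReal.le_of_forall_pos_le_add fun ε hε _ => ?_
    obtain ⟨g, hgf, hgu, hgi⟩ := exists_upperSemicontinuous_le_lintegral_le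
      (fun x => (min (h x) N).toNNReal) hfin (ε := ε) (by exact_mod_cast hε.ne')
    have hgh : ∀ x, (g x : ℝ≥0∞) ≤ min (h x) N := fun x => by
      rw [← hcoe]
      exact_mod_cast hgf x
    have hgub : UpperSemicontinuous fun x => (g x : ℝ≥0∞) :=
      ENNReal.continuous_coe.comp_upperSemicontinuous hgu fun x y hxy => ENNReal.coe_le_coe.2 hxy
    have hgH : (fun x => (g x : ℝ≥0∞)) ∈ H :=
      hmono _ hgub.measurable ⟨h, hh, fun x => (hgh x).trans (min_le_left _ _)⟩
    simp only [hcoe] at hgi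
    refine hgi.trans (add_le_add (hU _ hgH ⟨hgub, N, fun x => ?_⟩) le_rfl)
    simpa using (hgh x).trans (min_le_right _ _)
  have hsup : ∀ x, ⨆ N : ℕ, min (h x) (N : ℝ≥0∞) = h x := fun x => by
    rw [← inf_iSup_eq, ENNReal.iSup_natCast, inf_top_eq]
  calc ∫⁻ x, h x ∂μ = ∫⁻ x, ⨆ N : ℕ, min (h x) (N : ℝ≥0∞) ∂μ := by simp only [hsup]
    _ = ⨆ N : ℕ, ∫⁻ x, min (h x) (N : ℝ≥0∞) ∂μ :=
        lintegral_iSup (fun N => (hmeas h hh).min measurable_const)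
          fun N M hNM x => min_le_min le_rfl (by exact_mod_cast hNM)
    _ ≤ 1 := iSup_le htrunc

section Restrict

set_option linter.unusedSectionVars false

variable {Ω : Type*} [MetricSpace Ω] [MeasurableSpace Ω] [BorelSpace Ω]

/-- The restrictions to `K` of the bounded continuous elements of `H`, together with the constant
`1 / k`. The latter forces the measures in the polar to have mass at most `k`. -/
def restrictTests (H : Set (Ω → ℝ≥0∞)) (K : Set Ω) (k : ℝ) : Set (K → ℝ≥0∞) :=
  {g | ∃ h ∈ H, IsCb h ∧ g = fun x : K => h x} ∪ {fun _ => (ENNReal.ofReal k)⁻¹}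

/-- The measures in `H°` that have mass at most `k` and are concentrated on `K`. -/
def polarOn (H : Set (Ω → ℝ≥0∞)) (K : Set Ω) (k : ℝ) : Set (Measure Ω) :=
  {μ ∈ polar H | μ univ ≤ ENNReal.ofReal k ∧ μ Kᶜ = 0}

variable {H : Set (Ω → ℝ≥0∞)} {K : Set Ω} {k : ℝ}

theorem isCb_of_mem_restrictTests (hk : 0 < k) : ∀ g ∈ restrictTests H K k, IsCb g := by
  rintro g (⟨h, hh, ⟨hc, C, hC⟩, rfl⟩ | rfl)
  · exact ⟨hc.comp continuous_subtype_val, C, fun x => hC x⟩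
  · have hne : (ENNReal.ofReal k)⁻¹ ≠ ⊤ := ENNReal.inv_ne_top.2 (ENNReal.ofReal_pos.2 hk).ne'
    exact ⟨continuous_const, (ENNReal.ofReal k)⁻¹.toNNReal,
      fun x => (ENNReal.coe_toNNReal hne).ge⟩

theorem measure_univ_le_of_mem_polar_restrictTests (hk : 0 < k) {μ : Measure K}
    (hμ : μ ∈ polar (restrictTests H K k)) : μ univ ≤ ENNReal.ofReal k := by
  have h := hμ.2 _ (Or.inr rfl)
  rw [lintegral_const, mul_comm, ← div_eq_mul_inv] at h
  simpa using (ENNReal.div_le_iff (ENNReal.ofReal_pos.2 hk).ne' ENNReal.ofReal_ne_top).1 h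

theorem map_val_mem_polar (hmeas : ∀ f ∈ H, Measurable f) (hmono : MonotoneSet H)
    (hreg : RegularSet H) {μ : Measure K} (hμ : μ ∈ polar (restrictTests H K k)) :
    μ.map Subtype.val ∈ polar H := by
  have := hμ.1
  refine mem_polar_of_isCb hmeas hmono hreg fun h hh hb => ?_
  rw [lintegral_map hb.1.measurable measurable_subtype_coe]
  exact hμ.2 _ (Or.inl ⟨h, hh, hb, rfl⟩)

theorem lintegral_comap_val (hK : MeasurableSet K) {μ : Measure Ω} (hμ : μ Kᶜ = 0)
    (g : Ω → ℝ≥0∞) : ∫⁻ x : K, g x ∂(μ.comap Subtype.val) = ∫⁻ x, g x ∂μ := by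
  rw [lintegral_subtype_comap hK, Measure.restrict_eq_self_of_ae_mem]
  exact hμ

theorem isFiniteMeasure_comap_val (hK : MeasurableSet K) (μ : Measure Ω) [IsFiniteMeasure μ] :
    IsFiniteMeasure (μ.comap (Subtype.val : K → Ω)) :=
  ⟨by
    rw [(MeasurableEmbedding.subtype_coe hK).comap_apply]
    exact measure_lt_top _ _⟩

theorem comap_val_mem_polar (hk : 0 < k) (hK : MeasurableSet K) {μ : Measure Ω}
    (hμ : μ ∈ polarOn H K k) : μ.comap Subtype.val ∈ polar (restrictTests H K k) := by
  have := hμ.1.1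
  refine ⟨isFiniteMeasure_comap_val hK μ, ?_⟩
  rintro g (⟨h, hh, hb, rfl⟩ | rfl)
  · rw [lintegral_comap_val hK hμ.2.2]
    exact hμ.1.2 h hh
  · rw [lintegral_comap_val hK hμ.2.2 fun _ => (ENNReal.ofReal k)⁻¹, lintegral_const]
    calc _ ≤ (ENNReal.ofReal k)⁻¹ * ENNReal.ofReal k := mul_le_mul_right hμ.2.1 _
      _ = 1 := ENNReal.inv_mul_cancel (ENNReal.ofReal_pos.2 hk).ne' ENNReal.ofReal_ne_top

theorem absolutelyContinuous_comap_val (hK : MeasurableSet K) {μ : Measure K} {ν : Measure Ω}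
    (h : μ.map Subtype.val ≪ ν) : μ ≪ ν.comap Subtype.val := by
  refine Measure.AbsolutelyContinuous.mk fun s hs h0 => ?_
  rw [(MeasurableEmbedding.subtype_coe hK).comap_apply] at h0
  have h1 := h h0
  rwa [(MeasurableEmbedding.subtype_coe hK).map_apply,
    preimage_image_eq _ Subtype.val_injective] at h1

theorem zero_mem_polar : (0 : Measure Ω) ∈ polar H := ⟨inferInstance, by simp⟩

theorem restrict_mem_polarOn (hK : MeasurableSet K) {μ : Measure Ω} (hμ : μ ∈ polar H)
    {L : Set Ω} (hKL : K ⊆ L) (hk : (μ univ).toReal ≤ k) : μ.restrict K ∈ polarOn H L k := by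
  have := hμ.1
  refine ⟨⟨inferInstance, fun h hh => (setLIntegral_le_lintegral _ _).trans (hμ.2 h hh)⟩, ?_, ?_⟩
  · rw [Measure.restrict_apply_univ]
    exact (measure_mono (subset_univ K)).trans
      ((ENNReal.le_ofReal_iff_toReal_le (measure_ne_top _ _) (ENNReal.toReal_nonneg.trans hk)).2 hk)
  · refine measure_mono_null (compl_subset_compl.2 hKL) ?_
    rw [Measure.restrict_apply hK.compl, compl_inter_self, measure_empty]

section Exhaustion

variable [SigmaCompactSpace Ω]

theorem monotone_polarOn (H : Set (Ω → ℝ≥0∞)) :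
    Monotone fun n : ℕ => polarOn H (compactCovering Ω n) (n + 1) := by
  intro n m hnm μ hμ
  refine ⟨hμ.1, hμ.2.1.trans (ENNReal.ofReal_le_ofReal ?_), measure_mono_null
    (compl_subset_compl.2 (compactCovering_subset Ω hnm)) hμ.2.2⟩
  have : (n : ℝ) ≤ m := by exact_mod_cast hnm
  linarith

theorem restrict_mem_iUnion_polarOn {μ : Measure Ω} (hμ : μ ∈ polar H) (n : ℕ) :
    μ.restrict (compactCovering Ω n) ∈ ⋃ m : ℕ, polarOn H (compactCovering Ω m) (m + 1) := by
  obtain ⟨m, hm⟩ := exists_nat_ge (μ univ).toReal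
  refine mem_iUnion.2 ⟨max n m, restrict_mem_polarOn
    (isCompact_compactCovering Ω n).measurableSet hμ
    (compactCovering_subset Ω (le_max_left n m)) ?_⟩
  have : (m : ℝ) ≤ (max n m : ℕ) := by exact_mod_cast le_max_right n m
  linarith

theorem monotone_setLIntegral_compactCovering (μ : Measure Ω) (f : Ω → ℝ≥0∞) :
    Monotone fun n => ∫⁻ x in compactCovering Ω n, f x ∂μ :=
  fun _ _ h => lintegral_mono_set (compactCovering_subset Ω h)

theorem lintegral_eq_iSup_compactCovering (μ : Measure Ω) (f : Ω → ℝ≥0∞) :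
    ∫⁻ x, f x ∂μ = ⨆ n, ∫⁻ x in compactCovering Ω n, f x ∂μ := by
  rw [← setLIntegral_iUnion_of_directed _
    (directed_of_isDirected_le fun _ _ h => compactCovering_subset Ω h), iUnion_compactCovering,
    Measure.restrict_univ]

end Exhaustion

end Restrict

/-! ### Duality on σ-compact spaces -/

section Assembly

set_option linter.unusedSectionVars false

variable {Ω₁ Ω₂ : Type*} [MetricSpace Ω₁] [MeasurableSpace Ω₁] [BorelSpace Ω₁]
  [MetricSpace Ω₂] [MeasurableSpace Ω₂] [BorelSpace Ω₂]
  {H₁ : Set (Ω₁ → ℝ≥0∞)} {H₂ : Set (Ω₂ → ℝ≥0∞)}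

/-- Hedging against the measures carried by a compact rectangle `K₁ × K₂` and of mass at most
`k`: the compact duality on the subtypes, transferred to the ambient spaces. -/
theorem hedge_polarOn (hmeas₁ : ∀ f ∈ H₁, Measurable f) (hmeas₂ : ∀ f ∈ H₂, Measurable f)
    (hmono₁ : MonotoneSet H₁) (hmono₂ : MonotoneSet H₂)
    (hreg₁ : RegularSet H₁) (hreg₂ : RegularSet H₂)
    (ν : Measure Ω₁) [IsFiniteMeasure ν] (hν : ∀ μ ∈ polar H₁, μ ≪ ν)
    {f : Ω₁ × Ω₂ → ℝ≥0∞} (hf : Measurable f) {c : ℝ} (hc : 0 < c)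
    (hfc : transportPrice H₁ H₂ f < ENNReal.ofReal c) {K₁ : Set Ω₁} {K₂ : Set Ω₂}
    (hK₁ : IsCompact K₁) (hK₂ : IsCompact K₂) {k : ℝ} (hk : 0 < k) :
    Hedge (polarOn H₁ K₁ k) (polarOn H₂ K₂ k) f (ENNReal.ofReal c) := by
  have := isCompact_iff_compactSpace.1 hK₁
  have := isCompact_iff_compactSpace.1 hK₂
  have hm₁ := hK₁.measurableSet
  have hm₂ := hK₂.measurableSet
  have hval : Measurable (Prod.map Subtype.val Subtype.val : K₁ × K₂ → Ω₁ × Ω₂) :=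
    measurable_subtype_coe.prodMap measurable_subtype_coe
  have hsub : Hedge (polar (restrictTests H₁ K₁ k)) (polar (restrictTests H₂ K₂ k))
      (fun ω : K₁ × K₂ => f (Prod.map Subtype.val Subtype.val ω)) (ENNReal.ofReal c) := by
    by_contra hnot
    have := isFiniteMeasure_comap_val hm₁ ν
    obtain ⟨μ, hμ, h1, h2, h3⟩ := exists_measure_of_not_hedge_of_measurable
      (isCb_of_mem_restrictTests hk) (isCb_of_mem_restrictTests hk) hk
      (fun μ => measure_univ_le_of_mem_polar_restrictTests hk) (ν.comap Subtype.val)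
      (fun μ hμ => absolutelyContinuous_comap_val hm₁
        (hν _ (map_val_mem_polar hmeas₁ hmono₁ hreg₁ hμ))) hc (hf.comp hval) hnot
    refine hfc.not_ge (h3.trans (le_sSup
      ⟨μ.map (Prod.map Subtype.val Subtype.val), ⟨inferInstance, ?_, ?_⟩, ?_⟩))
    · have := map_val_mem_polar hmeas₁ hmono₁ hreg₁ h1
      rw [Measure.map_map measurable_subtype_coe measurable_fst] at this
      rwa [Measure.map_map measurable_fst hval]
    · have := map_val_mem_polar hmeas₂ hmono₂ hreg₂ h2
      rw [Measure.map_map measurable_subtype_coe measurable_snd] at this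
      rwa [Measure.map_map measurable_snd hval]
    · rw [lintegral_map hf hval]
      rfl
  obtain ⟨f₁, f₂, hf₁, hf₂, hle, hint⟩ := hsub
  have he₁ := MeasurableEmbedding.subtype_coe hm₁
  have he₂ := MeasurableEmbedding.subtype_coe hm₂
  -- Off `Kᵢ` the hedge may be infinite, since the measures under consideration do not charge `Kᵢᶜ`.
  refine ⟨Function.extend Subtype.val f₁ fun _ => ⊤, Function.extend Subtype.val f₂ fun _ => ⊤,
    he₁.measurable_extend hf₁ measurable_const, he₂.measurable_extend hf₂ measurable_const,
    fun ω => ?_, fun μ₁ h₁ μ₂ h₂ => ?_⟩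
  · by_cases h1 : ω.1 ∈ K₁
    · by_cases h2 : ω.2 ∈ K₂
      · have e1 := Subtype.val_injective.extend_apply f₁ (fun _ => ⊤) ⟨ω.1, h1⟩
        have e2 := Subtype.val_injective.extend_apply f₂ (fun _ => ⊤) ⟨ω.2, h2⟩
        simp only at e1 e2
        rw [e1, e2]
        exact hle (⟨ω.1, h1⟩, ⟨ω.2, h2⟩)
      · rw [Function.extend_apply' (f := (Subtype.val : K₂ → Ω₂)) _ _ _
          (by rintro ⟨y, hy⟩; exact h2 (hy ▸ y.2)), add_top]
        exact le_top
    · rw [Function.extend_apply' (f := (Subtype.val : K₁ → Ω₁)) _ _ _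
        (by rintro ⟨y, hy⟩; exact h1 (hy ▸ y.2)), top_add]
      exact le_top
  · rw [← lintegral_comap_val hm₁ h₁.2.2, ← lintegral_comap_val hm₂ h₂.2.2]
    simp only [Subtype.val_injective.extend_apply]
    exact hint _ (comap_val_mem_polar hk hm₁ h₁) _ (comap_val_mem_polar hk hm₂ h₂)

/-- Strong duality: every cost `c` above the transport price is sufficient for a hedge against all
of `H₁°` and `H₂°`. Every measure in `Hᵢ°` is the increasing limit of its restrictions to a compact
exhaustion. -/
theorem hedge_polar [SigmaCompactSpace Ω₁] [SigmaCompactSpace Ω₂]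
    (hmeas₁ : ∀ f ∈ H₁, Measurable f) (hmeas₂ : ∀ f ∈ H₂, Measurable f)
    (hmono₁ : MonotoneSet H₁) (hmono₂ : MonotoneSet H₂)
    (hreg₁ : RegularSet H₁) (hreg₂ : RegularSet H₂)
    (ν : Measure Ω₁) [IsFiniteMeasure ν] (hν : ∀ μ ∈ polar H₁, μ ≪ ν)
    {f : Ω₁ × Ω₂ → ℝ≥0∞} (hf : Measurable f) {c : ℝ} (hc : 0 < c)
    (hfc : transportPrice H₁ H₂ f < ENNReal.ofReal c) :
    Hedge (polar H₁) (polar H₂) f (ENNReal.ofReal c) := by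
  have hn : ∀ n : ℕ, Hedge (polarOn H₁ (compactCovering Ω₁ n) (n + 1))
      (polarOn H₂ (compactCovering Ω₂ n) (n + 1)) f (ENNReal.ofReal c) := fun n =>
    hedge_polarOn hmeas₁ hmeas₂ hmono₁ hmono₂ hreg₁ hreg₂ ν hν hf hc hfc
      (isCompact_compactCovering Ω₁ n) (isCompact_compactCovering Ω₂ n) n.cast_add_one_pos
  obtain ⟨f₁, f₂, hf₁, hf₂, hle, hint⟩ := Hedge.iSup ν (monotone_polarOn H₁) (monotone_polarOn H₂)
    (fun n μ hμ => hν μ hμ.1) monotone_const hn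
  refine ⟨f₁, f₂, hf₁, hf₂, fun ω => by simpa using hle ω, fun μ₁ h₁ μ₂ h₂ => ?_⟩
  rw [lintegral_eq_iSup_compactCovering, lintegral_eq_iSup_compactCovering,
    ENNReal.iSup_add_iSup_of_monotone (monotone_setLIntegral_compactCovering _ _)
      (monotone_setLIntegral_compactCovering _ _)]
  exact iSup_le fun n => hint _ (restrict_mem_iUnion_polarOn h₁ n) _
    (restrict_mem_iUnion_polarOn h₂ n)

theorem transportPrice_le {f : Ω₁ × Ω₂ → ℝ≥0∞} {f₁ : Ω₁ → ℝ≥0∞} {f₂ : Ω₂ → ℝ≥0∞}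
    (hf₁ : Measurable f₁) (hf₂ : Measurable f₂) (hle : ∀ ω, f ω ≤ f₁ ω.1 + f₂ ω.2) :
    transportPrice H₁ H₂ f ≤ priceH H₁ f₁ + priceH H₂ f₂ := by
  refine sSup_le ?_
  rintro _ ⟨μ, ⟨hμ, h₁, h₂⟩, rfl⟩
  calc ∫⁻ ω, f ω ∂μ ≤ ∫⁻ ω, (f₁ ω.1 + f₂ ω.2) ∂μ := lintegral_mono hle
    _ = ∫⁻ x, f₁ x ∂(μ.map Prod.fst) + ∫⁻ y, f₂ y ∂(μ.map Prod.snd) := by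
        rw [lintegral_add_left (f := fun ω : Ω₁ × Ω₂ => f₁ ω.1) (hf₁.comp measurable_fst),
          lintegral_map hf₁ measurable_fst,
          lintegral_map hf₂ measurable_snd]
    _ ≤ _ := add_le_add (le_sSup (show _ ∈ {x | ∃ μ ∈ polar H₁, x = ∫⁻ ω, f₁ ω ∂μ} from ⟨_, h₁, rfl⟩))
          (le_sSup (show _ ∈ {x | ∃ μ ∈ polar H₂, x = ∫⁻ ω, f₂ ω ∂μ} from ⟨_, h₂, rfl⟩))

theorem priceH_add_priceH_le {f₁ : Ω₁ → ℝ≥0∞} {f₂ : Ω₂ → ℝ≥0∞} {c : ℝ≥0∞}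
    (h : ∀ μ₁ ∈ polar H₁, ∀ μ₂ ∈ polar H₂, ∫⁻ x, f₁ x ∂μ₁ + ∫⁻ y, f₂ y ∂μ₂ ≤ c) :
    priceH H₁ f₁ + priceH H₂ f₂ ≤ c := by
  rw [priceH, priceH, sSup_eq_iSup', sSup_eq_iSup']
  have : Nonempty {x : ℝ≥0∞ | ∃ μ ∈ polar H₁, x = ∫⁻ ω, f₁ ω ∂μ} := ⟨_, 0, zero_mem_polar, rfl⟩
  have : Nonempty {x : ℝ≥0∞ | ∃ μ ∈ polar H₂, x = ∫⁻ ω, f₂ ω ∂μ} := ⟨_, 0, zero_mem_polar, rfl⟩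
  refine ENNReal.iSup_add_iSup_le ?_
  rintro ⟨_, μ₁, h₁, rfl⟩ ⟨_, μ₂, h₂, rfl⟩
  exact h μ₁ h₁ μ₂ h₂

end Assembly

end Duality

/-- (Remark 4.2.2 in Bartl–Kupper, "A pointwise bipolar theorem": the superhedging
duality.)  Under the assumptions of the transport duality theorem, for every
`f ∈ L⁰₊(Ω₁ × Ω₂)`,
`inf{m ∈ [0,∞) : f ≤ f₁ ⊕ f₂ for some fᵢ ∈ L⁰₊(Ωᵢ) with π₁(f₁) + π₂(f₂) ≤ m}
  = sup{⟨f,μ⟩ : μ ∈ ca₊(Ω₁ × Ω₂), μ₁ ∈ H₁°, μ₂ ∈ H₂°}`. -/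
theorem transport_superhedging_duality
    {Ω₁ Ω₂ : Type*}
    [MetricSpace Ω₁] [SigmaCompactSpace Ω₁] [MeasurableSpace Ω₁] [BorelSpace Ω₁]
    [MetricSpace Ω₂] [SigmaCompactSpace Ω₂] [MeasurableSpace Ω₂] [BorelSpace Ω₂]
    (H₁ : Set (Ω₁ → ℝ≥0∞)) (H₂ : Set (Ω₂ → ℝ≥0∞))
    (hmeas₁ : ∀ f ∈ H₁, Measurable f) (hmeas₂ : ∀ f ∈ H₂, Measurable f)
    (hne₁ : H₁.Nonempty) (hne₂ : H₂.Nonempty)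
    (hmono₁ : MonotoneSet H₁) (hmono₂ : MonotoneSet H₂)
    (hconv₁ : ConvexSet H₁) (hconv₂ : ConvexSet H₂)
    (hreg₁ : RegularSet H₁) (hreg₂ : RegularSet H₂)
    (hliminf₁ : LiminfClosed H₁) (hliminf₂ : LiminfClosed H₂)
    (hdom₁ : ∃ ν₁ : Measure Ω₁, IsFiniteMeasure ν₁ ∧ ∀ μ ∈ polar H₁, μ ≪ ν₁)
    (hdom₂ : ∃ ν₂ : Measure Ω₂, IsFiniteMeasure ν₂ ∧ ∀ μ ∈ polar H₂, μ ≪ ν₂)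
    (f : Ω₁ × Ω₂ → ℝ≥0∞) (hf : Measurable f) :
    sInf {m : ℝ≥0∞ | m ≠ ⊤ ∧ ∃ (f₁ : Ω₁ → ℝ≥0∞) (f₂ : Ω₂ → ℝ≥0∞),
        Measurable f₁ ∧ Measurable f₂ ∧ (∀ ω, f ω ≤ f₁ ω.1 + f₂ ω.2) ∧
        priceH H₁ f₁ + priceH H₂ f₂ ≤ m} =
      transportPrice H₁ H₂ f := by
  apply le_antisymm
  · refine le_of_forall_gt_imp_ge_of_dense fun c hc => ?_
    rcases eq_or_ne c ⊤ with rfl | hctop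
    · exact le_top
    obtain ⟨ν₁, hν₁, hdom⟩ := hdom₁
    have hc0 : 0 < c.toReal := ENNReal.toReal_pos (pos_of_gt hc).ne' hctop
    have hceq := ENNReal.ofReal_toReal hctop
    obtain ⟨f₁, f₂, hf₁, hf₂, hle, hint⟩ := hedge_polar hmeas₁ hmeas₂ hmono₁ hmono₂ hreg₁ hreg₂ ν₁
      hdom hf hc0 (hceq.symm ▸ hc)
    exact sInf_le ⟨hctop, f₁, f₂, hf₁, hf₂, hle, priceH_add_priceH_le (hceq ▸ hint)⟩
  · refine le_sInf ?_
    rintro m ⟨-, f₁, f₂, hf₁, hf₂, hle, hm⟩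
    exact (transportPrice_le hf₁ hf₂ hle).trans hm
end

section
/- Let H ⊆ L⁰_{b-} be monotone and closed under liminf, and define φ(f) := inf{m ∈ ℝ : m + h ≥ f pointwise for some h ∈ H}. Then H = {f ∈ L⁰_{b-} : φ(f) ≤ 0}; in particular, φ(f) ≤ 0 if and only if f ≤ h pointwise for some h ∈ H. -/
/-!
If `φ(f) ≤ 0`, then for every `n` some `m < 1/(n+1)` and `h ∈ H` satisfy `f ≤ m + h`, so that
`f - 1/(n+1) ≤ h` and `f - 1/(n+1) ∈ H` by monotonicity. These functions are uniformly bounded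
from below and converge pointwise to `f`, so `f ∈ H` by closedness under `liminf`. Conversely,
`f ≤ h` with `h ∈ H` makes `m = 0` admissible in the infimum defining `φ(f)`.
-/

open MeasureTheory Filter ENNReal NNReal

/-- Positive part of an extended real number, as an element of `[0,∞]`. -/
noncomputable def ERealPosPart (x : EReal) : ℝ≥0∞ :=
  if x = ⊤ then ⊤ else ENNReal.ofReal x.toReal

section Defs

variable {Ω : Type*} [TopologicalSpace Ω] [MeasurableSpace Ω]

/-- The pairing `⟨f,μ⟩ = ∫ f dμ` for an extended-real-valued function `f`; for `f` bounded
from below and `μ` a finite measure this is the usual (extended-valued) integral. -/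
noncomputable def ePair (f : Ω → EReal) (μ : Measure Ω) : EReal :=
  ((∫⁻ x, ERealPosPart (f x) ∂μ : ℝ≥0∞) : EReal) -
    ((∫⁻ x, ERealPosPart (-f x) ∂μ : ℝ≥0∞) : EReal)

/-- `L⁰_{b-}`: the set of Borel measurable functions `Ω → ℝ ∪ {+∞}` which are bounded from
below (modelled as `EReal`-valued functions bounded below by a real constant). -/
def L0b : Set (Ω → EReal) :=
  {f | Measurable f ∧ ∃ c : ℝ, ∀ x, (c : EReal) ≤ f x}

/-- `H ⊆ L⁰_{b-}` is monotone: `f ∈ H` whenever `f ∈ L⁰_{b-}` satisfies `f ≤ h` for some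
`h ∈ H`. -/
def MonotoneB (H : Set (Ω → EReal)) : Prop :=
  ∀ f ∈ L0b, (∃ h ∈ H, ∀ x, f x ≤ h x) → f ∈ H

/-- `H` is normalized: the constant function `0` belongs to `H` and no constant
function `ε > 0` belongs to `H`. -/
def NormalizedB (H : Set (Ω → EReal)) : Prop :=
  (fun _ => (0 : EReal)) ∈ H ∧ ∀ ε : ℝ, 0 < ε → (fun _ => (ε : EReal)) ∉ H

/-- `H` is tight: for every constant `m ∈ ℝ` with `m ∈ H`, every `n ∈ ℕ` and `ε > 0` there
is a compact `K ⊆ Ω` with `m − ε + n·1_{Kᶜ} ∈ H`. -/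
def TightB (H : Set (Ω → EReal)) : Prop :=
  ∀ m : ℝ, (fun _ => (m : EReal)) ∈ H → ∀ n : ℕ, ∀ ε : ℝ, 0 < ε →
    ∃ K : Set Ω, IsCompact K ∧
      (fun x => (m : EReal) - (ε : EReal) + (Kᶜ).indicator (fun _ => (n : EReal)) x) ∈ H

/-- `H` is closed under `liminf`: `liminf_n h_n ∈ H` for every sequence `(h_n)` in `H`
with `h_n ≥ c` for some constant `c ∈ ℝ`. -/
def LiminfClosedB (H : Set (Ω → EReal)) : Prop :=
  ∀ h : ℕ → Ω → EReal, (∀ n, h n ∈ H) → (∃ c : ℝ, ∀ n x, (c : EReal) ≤ h n x) →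
    (fun x => liminf (fun n => h n x) atTop) ∈ H

/-- `H` is convex. -/
def ConvexB (H : Set (Ω → EReal)) : Prop :=
  ∀ f ∈ H, ∀ g ∈ H, ∀ t : ℝ, 0 ≤ t → t ≤ 1 →
    (fun x => (t : EReal) * f x + ((1 - t : ℝ) : EReal) * g x) ∈ H

/-- `h` is (the coercion of) a bounded continuous real-valued function. -/
def IsCbB (h : Ω → EReal) : Prop :=
  Continuous h ∧ ∃ C : ℝ, ∀ x, -(C : EReal) ≤ h x ∧ h x ≤ (C : EReal)

/-- `h` is (the coercion of) a bounded upper semicontinuous real-valued function. -/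
def IsUbB (h : Ω → EReal) : Prop :=
  UpperSemicontinuous h ∧ ∃ C : ℝ, ∀ x, -(C : EReal) ≤ h x ∧ h x ≤ (C : EReal)

/-- `H` is regular: for every Borel probability measure `μ`, the supremum of `⟨h,μ⟩` over
`H ∩ U_b` coincides with the supremum over `H ∩ C_b`. -/
def RegularB (H : Set (Ω → EReal)) : Prop :=
  ∀ μ : Measure Ω, IsProbabilityMeasure μ →
    sSup {x : EReal | ∃ h ∈ H, IsUbB h ∧ x = ePair h μ} =
      sSup {x : EReal | ∃ h ∈ H, IsCbB h ∧ x = ePair h μ}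

/-- The polar `H°` of `H ⊆ L⁰_{b-}`: all finite positive Borel measures `μ` with
`⟨f,μ⟩ ≤ 1` for all `f ∈ H`. -/
def polarB (H : Set (Ω → EReal)) : Set (Measure Ω) :=
  {μ | IsFiniteMeasure μ ∧ ∀ f ∈ H, ePair f μ ≤ 1}

/-- The bipolar `H°°` of `H ⊆ L⁰_{b-}`. -/
def bipolarB (H : Set (Ω → EReal)) : Set (Ω → EReal) :=
  {f | f ∈ L0b ∧ ∀ μ ∈ polarB H, ePair f μ ≤ 1}

/-- The superhedging functional `φ(f) = inf{m ∈ ℝ : m + h ≥ f for some h ∈ H}` (the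
infimum of the empty set being `+∞`). -/
noncomputable def sprice (H : Set (Ω → EReal)) (f : Ω → EReal) : EReal :=
  sInf ((fun m : ℝ => (m : EReal)) ''
    {m : ℝ | ∃ h ∈ H, ∀ x, f x ≤ (m : EReal) + h x})

end Defs

theorem sprice_nonpos_of_le {Ω : Type*} {H : Set (Ω → EReal)} {f h : Ω → EReal}
    (hh : h ∈ H) (hf : ∀ x, f x ≤ h x) : sprice H f ≤ 0 :=
  sInf_le ⟨0, ⟨h, hh, fun x => by simpa using hf x⟩, by simp⟩

theorem sub_const_mem_L0b {Ω : Type*} [MeasurableSpace Ω] {f : Ω → EReal} (hf : f ∈ L0b)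
    (ε : ℝ) : (fun x => f x - (ε : EReal)) ∈ L0b := by
  obtain ⟨hm, c, hc⟩ := hf
  refine ⟨?_, c - ε, fun x => ?_⟩
  · simp only [sub_eq_add_neg]
    exact hm.add measurable_const
  · rw [EReal.coe_sub]
    exact EReal.sub_le_sub (hc x) le_rfl

/-- Monotonicity turns approximate superhedging of `f` into membership of `f - ε`. -/
theorem sub_const_mem_of_sprice_nonpos {Ω : Type*} [MeasurableSpace Ω] {H : Set (Ω → EReal)}
    (hmono : MonotoneB H) {f : Ω → EReal} (hf : f ∈ L0b) (hφ : sprice H f ≤ 0)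
    {ε : ℝ} (hε : 0 < ε) : (fun x => f x - (ε : EReal)) ∈ H := by
  obtain ⟨_, ⟨m, ⟨h, hh, hle⟩, rfl⟩, hm⟩ :=
    sInf_lt_iff.1 (lt_of_le_of_lt hφ (EReal.coe_pos.2 hε))
  refine hmono _ (sub_const_mem_L0b hf ε) ⟨h, hh, fun x => ?_⟩
  exact EReal.sub_le_of_le_add' ((hle x).trans (add_le_add hm.le le_rfl))

theorem tendsto_sub_one_div (a : EReal) :
    Tendsto (fun n : ℕ => a - ((1 / ((n : ℝ) + 1) : ℝ) : EReal)) atTop (nhds a) := by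
  have h0 : Tendsto (fun n : ℕ => ((-(1 / ((n : ℝ) + 1)) : ℝ) : EReal)) atTop
      (nhds ((0 : ℝ) : EReal)) := by
    have h := (tendsto_one_div_add_atTop_nhds_zero_nat (𝕜 := ℝ)).neg
    rw [neg_zero] at h
    exact (continuous_coe_real_ereal.tendsto 0).comp h
  have hadd : ContinuousAt (fun p : EReal × EReal => p.1 + p.2) (a, ((0 : ℝ) : EReal)) :=
    EReal.continuousAt_add (Or.inr (EReal.coe_ne_bot 0)) (Or.inr (EReal.coe_ne_top 0))
  have h := hadd.tendsto.comp ((tendsto_const_nhds (x := a)).prodMk_nhds h0)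
  simpa [Function.comp_def, sub_eq_add_neg] using h

theorem mem_of_sprice_nonpos {Ω : Type*} [MeasurableSpace Ω] {H : Set (Ω → EReal)}
    (hmono : MonotoneB H) (hliminf : LiminfClosedB H) {f : Ω → EReal} (hf : f ∈ L0b)
    (hφ : sprice H f ≤ 0) : f ∈ H := by
  obtain ⟨c, hc⟩ := hf.2
  have key := hliminf (fun (n : ℕ) x => f x - ((1 / ((n : ℝ) + 1) : ℝ) : EReal))
    (fun n => sub_const_mem_of_sprice_nonpos hmono hf hφ (by positivity))
    ⟨c - 1, fun n x => by
      rw [EReal.coe_sub]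
      refine EReal.sub_le_sub (hc x) (EReal.coe_le_coe_iff.2 ?_)
      rw [div_le_one (by positivity)]
      linarith [(Nat.cast_nonneg n : (0 : ℝ) ≤ n)]⟩
  have heq : (fun x => liminf (fun n : ℕ => f x - ((1 / ((n : ℝ) + 1) : ℝ) : EReal)) atTop) = f :=
    funext fun x => (tendsto_sub_one_div (f x)).liminf_eq
  exact heq ▸ key

/-- (From the proof of Proposition 2.4 in Bartl–Kupper, "A pointwise bipolar theorem".)
Let `H ⊆ L⁰_{b-}` be monotone and closed under `liminf`, and let
`φ(f) = inf{m ∈ ℝ : m + h ≥ f for some h ∈ H}`.  Then `H = {f ∈ L⁰_{b-} : φ(f) ≤ 0}`; in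
particular `φ(f) ≤ 0` if and only if `f ≤ h` for some `h ∈ H`. -/
theorem sprice_level_set
    {Ω : Type*} [MetricSpace Ω] [MeasurableSpace Ω] [BorelSpace Ω]
    (H : Set (Ω → EReal)) (hsub : H ⊆ L0b)
    (hmono : MonotoneB H) (hliminf : LiminfClosedB H) :
    H = {f | f ∈ L0b ∧ sprice H f ≤ 0} ∧
      ∀ f ∈ L0b, (sprice H f ≤ 0 ↔ ∃ h ∈ H, ∀ x, f x ≤ h x) := by
  refine ⟨Set.Subset.antisymm
    (fun f hf => ⟨hsub hf, sprice_nonpos_of_le hf fun _ => le_rfl⟩)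
    (fun f hf => mem_of_sprice_nonpos hmono hliminf hf.1 hf.2), fun f hf => ⟨fun hφ => ?_, ?_⟩⟩
  · exact ⟨f, mem_of_sprice_nonpos hmono hliminf hf hφ, fun _ => le_rfl⟩
  · rintro ⟨h, hh, hle⟩
    exact sprice_nonpos_of_le hh hle
end

section
/- Let H ⊆ L⁰_{b-} be monotone, normalized, regular, tight, convex and closed under liminf, and define φ(f) := inf{m ∈ ℝ : m + h ≥ f pointwise for some h ∈ H}. Then for every f ∈ L⁰_{b-}, φ(f) = sup_{μ ∈ ca₊¹} ( ⟨f,μ⟩ − sup_{h ∈ H∩C_b} ⟨h,μ⟩ ), with the convention +∞ − ∞ := −∞. -/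
open MeasureTheory Filter ENNReal NNReal

/-!
Write `S(μ) = sup_{h ∈ H ∩ C_b} ⟨h, μ⟩`, and say that `f` is superhedged from `a` if `f ≤ a + h`
for some `h ∈ H`, so that `sprice H f` is the infimum of these `a`.

*Weak duality* (`weak_duality`).  If `f ≤ m + h`, then `f - m ∈ H` by monotonicity, and it suffices
that `⟨k, μ⟩ ≤ S(μ)` for every `k ∈ H` (`ePair_le_sSup`).  Up to an additive constant `k ≥ 0`, and
the integral of `k` is approximated from below by integrals of bounded upper semicontinuous minorants.
These lie in `H` by monotonicity, so regularity bounds their integrals by `S(μ)`.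

*Strong duality* (`exists_measure_of_not_superHedged`).  Let `f` not be superhedged from `a`.
Closedness under `liminf` makes this property stable along increasing sequences
(`SuperHedged.of_tendsto`), so `f` may be truncated and assumed real and bounded.  The proof then
has three ingredients.

* *Capacitability.*  A Borel function on a metric space factors through a continuous map
  `T : Ω → ℝ^ℕ`, and the graph of the factor is analytic (`exists_analytic_graph`).  Choquet's
  argument, run along the branches parametrizing this graph, produces a decreasing sequence `G k` of
  bounded continuous functions, none of them superhedged from `a`, with pointwise limit at most `f`
  (`capacity_aux`).
* *Separation.*  In the Banach space of bounded continuous functions, the open convex set of the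
  `u ≥ G k - a + δ` for some `k` and `δ > 0` is disjoint from `H`.  Hahn-Banach gives a normalized
  positive functional `ℓ` with `ℓ h + a ≤ ℓ (G k)` for all `k` and all bounded continuous `h ∈ H`.
* *Representation.*  Tightness of `H` makes `ℓ` small on functions vanishing on a large compact set,
  so `ℓ` is integration against a Borel probability measure `μ` (`exists_measure_of_tight`).

Letting `k → ∞`, dominated convergence gives `S(μ) + a ≤ ⟨f, μ⟩`.
-/

section Aux

open Topology Set BoundedContinuousFunction

/-! ### Representation of tight positive functionals on bounded continuous functions -/

/-- A normalized positive functional on the bounded continuous functions is integration against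
a Borel probability measure as soon as it is tight.  The Riesz representation theorem provides
a measure on the Stone-Čech compactification; tightness says that it is carried by a countable
union of compact subsets of `Ω`, hence it can be pulled back to `Ω`. -/
theorem exists_measure_of_tight {Ω : Type*} [MetricSpace Ω] [MeasurableSpace Ω] [BorelSpace Ω]
    (ℓ : (Ω →ᵇ ℝ) →ₗ[ℝ] ℝ) (hpos : ∀ u, 0 ≤ u → 0 ≤ ℓ u) (h1 : ℓ 1 = 1)
    (htight : ∀ ε : ℝ, 0 < ε → ∃ K : Set Ω, IsCompact K ∧
      ∀ u : Ω →ᵇ ℝ, 0 ≤ u → u ≤ 1 → (∀ x ∈ K, u x = 0) → ℓ u ≤ ε) :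
    ∃ μ : Measure Ω, IsProbabilityMeasure μ ∧ ∀ u : Ω →ᵇ ℝ, ∫ x, u x ∂μ = ℓ u := by
  let _ : MeasurableSpace (StoneCech Ω) := borel _
  have : BorelSpace (StoneCech Ω) := ⟨rfl⟩
  let ι : Ω → StoneCech Ω := stoneCechUnit
  have hι : IsEmbedding ι := isEmbedding_stoneCechUnit
  let R : CompactlySupportedContinuousMap (StoneCech Ω) ℝ → (Ω →ᵇ ℝ) := fun g =>
    (BoundedContinuousFunction.mkOfCompact (g : C(StoneCech Ω, ℝ))).compContinuous
      ⟨ι, hι.continuous⟩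
  have hR : ∀ g x, R g x = g (ι x) := fun g x => rfl
  let Λ : CompactlySupportedContinuousMap (StoneCech Ω) ℝ →ₚ[ℝ] ℝ :=
    PositiveLinearMap.mk₀
      { toFun := fun g => ℓ (R g)
        map_add' := fun g g' => by
          rw [← map_add]; congr 1
        map_smul' := fun c g => by
          rw [← map_smul]; congr 1 }
      (fun g hg => hpos _ (fun x => hg (ι x)))
  let ν := RealRMK.rieszMeasure Λ
  have hν : ∀ g, ∫ y, g y ∂ν = ℓ (R g) := fun g => RealRMK.integral_rieszMeasure Λ g
  have : IsFiniteMeasure ν := inferInstanceAs (IsFiniteMeasure (RealRMK.rieszMeasure Λ))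
  have : ν.Regular := RealRMK.regular_rieszMeasure Λ
  have hcc : ∀ g : C(StoneCech Ω, ℝ), ∃ g' : CompactlySupportedContinuousMap (StoneCech Ω) ℝ,
    ∀ y, g' y = g y := fun g => ⟨⟨g, HasCompactSupport.of_compactSpace _⟩, fun _ => rfl⟩
  -- `ν` is concentrated on the copy of `Ω`: the mass outside the image of a compact set is small
  have hsmall : ∀ ε : ℝ, 0 < ε → ∃ S : Set (StoneCech Ω), IsClosed S ∧ S ⊆ range ι ∧
      ν Sᶜ ≤ ENNReal.ofReal ε := by
    intro ε hε
    obtain ⟨K, hK, hKℓ⟩ := htight ε hε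
    have hS : IsClosed (ι '' K) := (hK.image hι.continuous).isClosed
    refine ⟨ι '' K, hS, image_subset_range _ _, ?_⟩
    rw [hS.isOpen_compl.measure_eq_iSup_isCompact]
    refine iSup_le fun C => iSup_le fun hC => iSup_le fun hCc => ?_
    obtain ⟨g, hg0, hg1, hg01⟩ := exists_continuous_zero_one_of_isClosed hS hCc.isClosed
      (disjoint_left.2 fun y hy hy' => hC hy' hy)
    obtain ⟨g', hg'⟩ := hcc g
    have hle : ℓ (R g') ≤ ε := by
      apply hKℓ
      · intro x; simpa [hR, hg'] using (hg01 (ι x)).1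
      · intro x; simpa [hR, hg'] using (hg01 (ι x)).2
      · intro x hx; rw [hR, hg']; exact hg0 (mem_image_of_mem _ hx)
    have h3 : ν C ≤ ENNReal.ofReal (ℓ (R g')) :=
      RealRMK.rieszMeasure_le_of_eq_one Λ (fun x => by rw [hg']; exact (hg01 x).1) hCc
        (fun x hx => by rw [hg']; exact hg1 hx)
    exact h3.trans (ENNReal.ofReal_le_ofReal hle)
  have hrange : ν (range ι)ᶜ = 0 := by
    refine le_antisymm (ENNReal.le_of_forall_pos_le_add fun ε hε _ => ?_) bot_le
    obtain ⟨S, -, hSr, hS⟩ := hsmall ε hε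
    simpa using (measure_mono (compl_subset_compl.2 hSr)).trans hS
  have hnr : NullMeasurableSet (range ι) ν :=
    (NullMeasurableSet.of_null hrange).of_compl
  have hnull : ∀ s, MeasurableSet s → NullMeasurableSet (ι '' s) ν := by
    intro s hs
    have : ‹MeasurableSpace Ω› = (borel (StoneCech Ω)).comap ι := by
      rw [← borel_comap, ← hι.eq_induced]; exact BorelSpace.measurable_eq
    rw [this] at hs
    obtain ⟨t, ht, rfl⟩ := hs
    rw [image_preimage_eq_inter_range]
    exact ht.nullMeasurableSet.inter hnr
  let μ := ν.comap ι
  have hmeas : Measurable ι := hι.continuous.measurable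
  have hmap : μ.map ι = ν := by
    ext s hs
    rw [Measure.map_apply hmeas hs, Measure.comap_apply₀ _ _ hι.injective hnull
      (hmeas hs).nullMeasurableSet, image_preimage_eq_inter_range]
    exact measure_inter_conull hrange
  have hint : ∀ u : Ω →ᵇ ℝ, ∫ x, u x ∂μ = ℓ u := by
    intro u
    let u' : Ω → Icc (-‖u‖) ‖u‖ := fun x => ⟨u x, abs_le.1 (u.norm_coe_le_norm x)⟩
    have hu' : Continuous u' := u.continuous.subtype_mk _
    obtain ⟨g, hg⟩ := hcc ⟨fun y => ((stoneCechExtend hu' y : Icc (-‖u‖) ‖u‖) : ℝ),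
      continuous_subtype_val.comp (continuous_stoneCechExtend hu')⟩
    have hgu : ∀ x, g (ι x) = u x := by
      intro x
      rw [hg]
      simp [ι, u', stoneCechExtend_stoneCechUnit]
    have hRu : R g = u := by ext x; exact hgu x
    have h3 := integral_map (μ := μ) hmeas.aemeasurable (f := fun y => g y)
      g.continuous.aestronglyMeasurable
    rw [hmap, hν, hRu] at h3
    rw [h3]
    exact integral_congr_ae (ae_of_all _ fun x => (hgu x).symm)
  refine ⟨μ, ?_, hint⟩
  have h2 := hint 1
  rw [h1] at h2
  simp only [BoundedContinuousFunction.coe_one, Pi.one_apply, integral_const, smul_eq_mul, mul_one] at h2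
  refine ⟨?_⟩
  have h4 : (μ univ).toReal = 1 := h2
  exact (ENNReal.toReal_eq_one_iff _).1 h4

/-! ### Borel functions and analytic graphs -/

/-- A Borel subset of a metric space is the preimage of a Borel subset of `ℝ^ℕ` under a continuous
map.  This holds for an open set, through the distance to its complement, and the class of such sets
is a σ-algebra. -/
theorem exists_factor_set {Ω : Type*} [MetricSpace Ω] [MeasurableSpace Ω] [BorelSpace Ω]
    (s : Set Ω) (hs : MeasurableSet s) :
    ∃ T : Ω → (ℕ → ℝ), Continuous T ∧ ∃ t, MeasurableSet t ∧ T ⁻¹' t = s := by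
  rw [BorelSpace.measurable_eq (α := Ω)] at hs
  induction s, hs using MeasurableSpace.generateFrom_induction with
  | hC s hs _ =>
    obtain ⟨δ, hδc, hδ⟩ : ∃ δ : Ω → ℝ, Continuous δ ∧ ∀ x, 0 < δ x ↔ x ∈ s := by
      by_cases hne : (sᶜ).Nonempty
      · refine ⟨fun x => Metric.infDist x sᶜ, Metric.continuous_infDist_pt _, fun x => ?_⟩
        have hcl : IsClosed sᶜ := isClosed_compl_iff.2 hs
        rw [← hcl.notMem_iff_infDist_pos hne]
        simp
      · refine ⟨fun _ => 1, continuous_const, fun x => ?_⟩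
        rw [not_nonempty_iff_eq_empty, compl_empty_iff] at hne
        simp [hne]
    refine ⟨fun x _ => δ x, by fun_prop, {y | 0 < y 0},
      measurableSet_lt measurable_const (measurable_pi_apply 0), ?_⟩
    ext x; exact hδ x
  | empty => exact ⟨fun _ _ => 0, by fun_prop, ∅, MeasurableSet.empty, rfl⟩
  | compl s _ ih =>
    obtain ⟨T, hT, t, ht, rfl⟩ := ih
    exact ⟨T, hT, tᶜ, ht.compl, rfl⟩
  | iUnion s _ ih =>
    choose T hT t ht hst using ih
    refine ⟨fun x n => T n.unpair.1 x n.unpair.2, by fun_prop,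
      ⋃ n, (fun (y : ℕ → ℝ) m => y (Nat.pair n m)) ⁻¹' t n,
      MeasurableSet.iUnion fun n => (by fun_prop : Measurable _) (ht n), ?_⟩
    ext x
    simp [← hst]

/-- A Borel function on a metric space factors through a continuous map to `ℝ^ℕ`: combine the maps
obtained for the countably many sets `{f > q}` with `q` rational. -/
theorem exists_factor_fun {Ω : Type*} [MetricSpace Ω] [MeasurableSpace Ω] [BorelSpace Ω]
    (f : Ω → ℝ) (hf : Measurable f) :
    ∃ T : Ω → (ℕ → ℝ), Continuous T ∧ ∃ g : (ℕ → ℝ) → ℝ, Measurable g ∧ f = g ∘ T := by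
  obtain ⟨q, hq⟩ := exists_surjective_nat ℚ
  choose T hT t ht hst using fun n => exists_factor_set (f ⁻¹' Ioi (q n : ℝ)) (hf measurableSet_Ioi)
  let T' : Ω → (ℕ → ℝ) := fun x n => T n.unpair.1 x n.unpair.2
  have hT' : Continuous T' := by fun_prop
  refine ⟨T', hT', ?_⟩
  have hmem : ∀ n, MeasurableSet ((fun (y : ℕ → ℝ) m => y (Nat.pair n m)) ⁻¹' t n) :=
    fun n => (by fun_prop : Measurable _) (ht n)
  apply Measurable.exists_eq_measurable_comp
  have key : @Measurable _ _ (MeasurableSpace.comap T' inferInstance)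
      (MeasurableSpace.generateFrom (⋃ a : ℚ, {Ioi (a : ℝ)})) f := by
    refine @measurable_generateFrom _ _ (_) _ _ ?_
    intro s hs
    simp only [mem_iUnion, mem_singleton_iff] at hs
    obtain ⟨a, rfl⟩ := hs
    obtain ⟨n, rfl⟩ := hq a
    refine ⟨(fun (y : ℕ → ℝ) m => y (Nat.pair n m)) ⁻¹' t n, hmem n, ?_⟩
    rw [← hst]
    ext x
    simp [T']
  rw [← Real.borel_eq_generateFrom_Ioi_rat] at key
  convert! key

/-- For a Borel function `f = g ∘ T` with `T` continuous, the graph of `g` is a Borel, hence analytic,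
subset of `ℝ^ℕ × ℝ`; here `c` is a continuous parametrization of this graph by the Baire space. -/
theorem exists_analytic_graph {Ω : Type*} [MetricSpace Ω] [MeasurableSpace Ω] [BorelSpace Ω]
    [Nonempty Ω] (f : Ω → ℝ) (hf : Measurable f) :
    ∃ (T : Ω → (ℕ → ℝ)) (c : (ℕ → ℕ) → (ℕ → ℝ) × ℝ), Continuous T ∧ Continuous c ∧
      ∀ x r, f x = r ↔ ∃ σ, c σ = (T x, r) := by
  obtain ⟨T, hT, g, hg, rfl⟩ := exists_factor_fun f hf
  have hgr : MeasurableSet {p : (ℕ → ℝ) × ℝ | g p.1 = p.2} :=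
    measurableSet_eq_fun (by fun_prop) (by fun_prop)
  have han := hgr.analyticSet
  rw [AnalyticSet] at han
  rcases han with h | ⟨c, hc, hcr⟩
  · exfalso
    have : ((0 : ℕ → ℝ), g 0) ∈ {p : (ℕ → ℝ) × ℝ | g p.1 = p.2} := rfl
    rw [h] at this
    exact this
  · refine ⟨T, c, hT, hc, fun x r => ?_⟩
    have : (T x, r) ∈ range c ↔ g (T x) = r := by rw [hcr]; rfl
    exact this.symm

/-! ### Capacitability -/

/-- A form of Choquet's capacitability theorem for functions.  Let `f` be bounded with graph
parametrized by the Baire space through `T` and `c`, and let `Q` be an upward closed property which,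
if it holds for the limit of an increasing sequence, holds for some member of it.  If `Q f` holds,
then a decreasing sequence of bounded continuous functions satisfies `Q` and has pointwise limit at
most `f`.

The bounds `s k` on the branches `σ` are selected one coordinate at a time so that `Q` is
preserved; the functions `G k` are `k`-Lipschitz upper envelopes of the part of `f` parametrized by
the `σ` with `σ i ≤ s i` for `i < k`. Compactness of `{σ | ∀ i, σ i ≤ s i}` identifies the limit. -/
theorem capacity_aux {Ω P : Type*} [TopologicalSpace Ω] [MetricSpace P]
    (f : Ω → ℝ) (T : Ω → P) (c : (ℕ → ℕ) → P × ℝ) (hT : Continuous T) (hc : Continuous c)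
    (hgraph : ∀ x r, f x = r ↔ ∃ σ, c σ = (T x, r))
    (C : ℝ) (hfC : ∀ x, -C ≤ f x ∧ f x ≤ C) (hC : 0 ≤ C)
    (Q : (Ω → ℝ) → Prop) (hQmono : ∀ u v, Q u → (∀ x, u x ≤ v x) → Q v)
    (hQcont : ∀ (u : ℕ → Ω → ℝ) (v : Ω → ℝ), Monotone u → (∀ n x, -C ≤ u n x) →
      (∀ x, ∃ n, v x ≤ u n x) → Q v → ∃ n, Q (u n))
    (hQf : Q f) :
    ∃ G : ℕ → Ω →ᵇ ℝ, Antitone G ∧ (∀ k, Q (G k)) ∧ (∀ k x, -C ≤ G k x ∧ G k x ≤ C) ∧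
      ∀ x b, (∀ k, b < G k x) → b ≤ f x := by
  classical
  -- the part of `f` parametrized by a set `A` of branches, set to the lower bound elsewhere
  let F : Set (ℕ → ℕ) → Ω → ℝ := fun A x => if ∃ σ ∈ A, c σ = (T x, f x) then f x else -C
  have hstep : ∀ A, Q (F A) → ∀ k : ℕ, ∃ m : ℕ, Q (F (A ∩ {σ | σ k ≤ m})) := by
    intro A hA k
    refine hQcont (fun m => F (A ∩ {σ | σ k ≤ m})) (F A) ?_ ?_ ?_ hA
    · intro m m' hm x
      simp only [F]
      split_ifs with h1 h2
      · exact le_rfl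
      · obtain ⟨σ, hσ, hσ'⟩ := h1
        exact absurd ⟨σ, ⟨hσ.1, le_trans hσ.2 hm⟩, hσ'⟩ h2
      · exact (hfC x).1
      · exact le_rfl
    · intro m x
      simp only [F]
      split_ifs
      · exact (hfC x).1
      · exact le_rfl
    · intro x
      by_cases h : ∃ σ ∈ A, c σ = (T x, f x)
      · obtain ⟨σ, hσ, hσ'⟩ := h
        refine ⟨σ k, ?_⟩
        have h1 : ∃ σ' ∈ A ∩ {τ | τ k ≤ σ k}, c σ' = (T x, f x) :=
          ⟨σ, ⟨hσ, le_refl (σ k)⟩, hσ'⟩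
        simp only [F]
        rw [if_pos h1]
        split_ifs
        · exact le_rfl
        · exact (hfC x).1
      · refine ⟨0, ?_⟩
        simp only [F]
        rw [if_neg h]
        split_ifs
        · exact (hfC x).1
        · exact le_rfl
  choose m hm using hstep
  have hQ0 : Q (F univ) := by
    refine hQmono f _ hQf fun x => ?_
    have h1 : ∃ σ ∈ (univ : Set (ℕ → ℕ)), c σ = (T x, f x) := by
      obtain ⟨σ, hσ⟩ := (hgraph x (f x)).1 rfl
      exact ⟨σ, mem_univ _, hσ⟩
    simp only [F]
    rw [if_pos h1]
  -- the set of branches that remain after bounding the first `k` coordinates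
  let N : ℕ → {A : Set (ℕ → ℕ) // Q (F A)} := fun k => Nat.rec ⟨univ, hQ0⟩
    (fun k A => ⟨A.1 ∩ {σ | σ k ≤ m A.1 A.2 k}, hm A.1 A.2 k⟩) k
  let s : ℕ → ℕ := fun k => m (N k).1 (N k).2 k
  have hNs : ∀ k, (N (k + 1)).1 = (N k).1 ∩ {σ | σ k ≤ s k} := fun k => rfl
  have hN : ∀ k σ, σ ∈ (N k).1 ↔ ∀ i < k, σ i ≤ s i := by
    intro k
    induction k with
    | zero => intro σ; simp [N]
    | succ k ih =>
      intro σ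
      rw [hNs, mem_inter_iff, ih]
      constructor
      · rintro ⟨h1, h2⟩ i hi
        rcases Nat.lt_succ_iff_lt_or_eq.1 hi with h | rfl
        · exact h1 i h
        · exact h2
      · intro h
        exact ⟨fun i hi => h i (by omega), h k (by omega)⟩
  have hne : ∀ k, Nonempty (N k).1 := fun k => ⟨⟨0, (hN k 0).2 fun i _ => Nat.zero_le _⟩⟩
  have hanti : ∀ k σ, σ ∈ (N (k + 1)).1 → σ ∈ (N k).1 := fun k σ h => h.1
  -- Lipschitz upper envelopes
  let v : ℕ → P → (ℕ → ℕ) → ℝ := fun k p σ =>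
    max (-C) (min (c σ).2 C - k * dist p (c σ).1)
  have hvl : ∀ k p σ, -C ≤ v k p σ := fun k p σ => le_max_left _ _
  have hvu : ∀ k p σ, v k p σ ≤ C := by
    intro k p σ
    refine max_le (by linarith) ?_
    have : (0 : ℝ) ≤ k * dist p (c σ).1 := by positivity
    linarith [min_le_right (c σ).2 C]
  let g : ℕ → P → ℝ := fun k p => ⨆ σ : (N k).1, v k p σ
  have hbdd : ∀ k p, BddAbove (range fun σ : (N k).1 => v k p σ) := by
    rintro k p
    refine ⟨C, ?_⟩
    rintro _ ⟨σ, rfl⟩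
    exact hvu k p σ
  have hgu : ∀ k p, g k p ≤ C := fun k p => have := hne k; ciSup_le fun σ => hvu k p σ
  have hgl : ∀ k p, -C ≤ g k p := fun k p =>
    (hvl k p (Classical.choice (hne k)).1).trans (le_ciSup (hbdd k p) (Classical.choice (hne k)))
  have hglip : ∀ k : ℕ, LipschitzWith (k : ℝ≥0) (g k) := by
    intro k
    refine LipschitzWith.of_le_add_mul _ fun p q => ?_
    have := hne k
    refine ciSup_le fun σ => ?_
    have h1 := le_ciSup (hbdd k q) σ
    have h2 : (0 : ℝ) ≤ k * dist p q := by positivity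
    have h3 : (k : ℝ) * dist q (c σ).1 ≤ k * dist p q + k * dist p (c σ).1 := by
      rw [← mul_add]
      exact mul_le_mul_of_nonneg_left (by rw [dist_comm p q]; exact dist_triangle _ _ _) (by positivity)
    refine le_trans ?_ (add_le_add_left h1 _)
    simp only [NNReal.coe_natCast]
    refine max_le (by linarith [hvl k q σ]) ?_
    have h4 : min (c σ.1).2 C - k * dist q (c σ.1).1 ≤ v k q σ := le_max_right _ _
    linarith
  let G : ℕ → Ω →ᵇ ℝ := fun k => BoundedContinuousFunction.ofNormedAddCommGroup
    (fun x => g k (T x)) ((hglip k).continuous.comp hT) C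
    (fun x => abs_le.2 ⟨hgl _ _, hgu _ _⟩)
  have hG : ∀ k x, G k x = g k (T x) := fun k x => rfl
  refine ⟨G, ?_, ?_, ?_, ?_⟩
  · refine antitone_nat_of_succ_le fun k x => ?_
    change g (k + 1) (T x) ≤ g k (T x)
    have := hne (k + 1)
    refine ciSup_le fun σ => ?_
    refine le_trans ?_ (le_ciSup (hbdd k (T x)) ⟨σ.1, hanti k _ σ.2⟩)
    refine max_le_max le_rfl ?_
    push_cast
    have : 0 ≤ dist (T x) (c σ.1).1 := dist_nonneg
    linarith
  · intro k
    refine hQmono _ _ (N k).2 fun x => ?_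
    rw [hG]
    simp only [F]
    split_ifs with h
    · obtain ⟨σ, hσ, hσ'⟩ := h
      refine le_trans ?_ (le_ciSup (hbdd k (T x)) ⟨σ, hσ⟩)
      simp [v, hσ', (hfC x).2]
    · exact hgl _ _
  · intro k x
    exact ⟨hgl _ _, hgu _ _⟩
  · intro x b hb
    by_cases hbC : b < -C
    · exact hbC.le.trans (hfC x).1
    push Not at hbC
    have h1 : ∀ k, ∃ σ ∈ (N k).1, b < v k (T x) σ := by
      intro k
      have := hne k
      obtain ⟨σ, hσ⟩ := exists_lt_of_lt_ciSup (hb k)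
      exact ⟨σ.1, σ.2, hσ⟩
    choose σ hσN hσ using h1
    have h2 : ∀ k, b < min (c (σ k)).2 C - k * dist (T x) (c (σ k)).1 := by
      intro k
      rcases lt_max_iff.1 (hσ k) with h | h
      · linarith
      · exact h
    have h3 : ∀ k, b ≤ (c (σ k)).2 := by
      intro k
      have : (0 : ℝ) ≤ k * dist (T x) (c (σ k)).1 := by positivity
      linarith [h2 k, min_le_left (c (σ k)).2 C]
    have h4 : ∀ k : ℕ, k * dist (T x) (c (σ k)).1 ≤ C - b := by
      intro k
      linarith [h2 k, min_le_right (c (σ k)).2 C]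
    -- `σ k` is bounded by `s` only in its first `k` coordinates; truncating the remaining ones
    -- yields points of a compact product of finite sets and does not affect coordinatewise limits
    let τ : ℕ → ℕ → ℕ := fun k i => min (σ k i) (s i)
    have hK : IsCompact (Set.pi univ fun i => Iic (s i)) :=
      isCompact_univ_pi fun i => (finite_Iic (s i)).isCompact
    obtain ⟨ρ, -, φ, hφ, hφt⟩ := hK.tendsto_subseq (x := τ) (fun k i _ => mem_Iic.2 (min_le_right _ _))
    have hσt : Tendsto (fun j => σ (φ j)) atTop (𝓝 ρ) := by
      rw [tendsto_pi_nhds] at hφt ⊢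
      intro i
      refine (hφt i).congr' ?_
      filter_upwards [eventually_gt_atTop i] with j hj
      exact min_eq_left ((hN _ _).1 (hσN (φ j)) i (hj.trans_le (hφ.id_le j)))
    have hct := (hc.tendsto ρ).comp hσt
    have hsnd : Tendsto (fun j => (c (σ (φ j))).2) atTop (𝓝 (c ρ).2) :=
      (continuous_snd.tendsto _).comp hct
    have hfst : Tendsto (fun j => (c (σ (φ j))).1) atTop (𝓝 (c ρ).1) :=
      (continuous_fst.tendsto _).comp hct
    have hd := (tendsto_const_nhds (x := T x)).dist hfst
    have hd0 : Tendsto (fun j => dist (T x) (c (σ (φ j))).1) atTop (𝓝 0) := by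
      have hlim : Tendsto (fun j => (C - b) / (φ j : ℝ)) atTop (𝓝 0) :=
        tendsto_const_nhds.div_atTop (tendsto_natCast_atTop_atTop.comp hφ.tendsto_atTop)
      refine tendsto_of_tendsto_of_tendsto_of_le_of_le' tendsto_const_nhds hlim
        (Eventually.of_forall fun j => dist_nonneg) ?_
      filter_upwards [eventually_gt_atTop 0] with j hj
      have hpos : (0 : ℝ) < φ j := by exact_mod_cast hj.trans_le (hφ.id_le j)
      rw [le_div_iff₀ hpos, mul_comm]
      exact h4 _
    have hTx : T x = (c ρ).1 := dist_eq_zero.1 (tendsto_nhds_unique hd hd0)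
    have hfx : f x = (c ρ).2 := (hgraph x _).2 ⟨ρ, by rw [hTx]⟩
    rw [hfx]
    exact ge_of_tendsto' hsnd fun j => h3 _

/-! ### The pairing, superhedging and weak duality -/

theorem ePair_mono {Ω : Type*} [TopologicalSpace Ω] [MeasurableSpace Ω] {f g : Ω → EReal}
    (h : ∀ x, f x ≤ g x) (μ : Measure Ω) : ePair f μ ≤ ePair g μ := by
  have h1 : ∫⁻ x, ERealPosPart (f x) ∂μ ≤ ∫⁻ x, ERealPosPart (g x) ∂μ :=
    lintegral_mono fun x => EReal.toENNReal_le_toENNReal (h x)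
  have h2 : ∫⁻ x, ERealPosPart (-g x) ∂μ ≤ ∫⁻ x, ERealPosPart (-f x) ∂μ :=
    lintegral_mono fun x => EReal.toENNReal_le_toENNReal (EReal.neg_le_neg_iff.2 (h x))
  exact EReal.sub_le_sub (EReal.coe_ennreal_le_coe_ennreal_iff.2 h1)
    (EReal.coe_ennreal_le_coe_ennreal_iff.2 h2)

theorem ePair_coe {Ω : Type*} [TopologicalSpace Ω] [MeasurableSpace Ω] {u : Ω → ℝ}
    {μ : Measure Ω} (hu : Integrable u μ) :
    ePair (fun x => (u x : EReal)) μ = ((∫ x, u x ∂μ : ℝ) : EReal) := by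
  have h1 : ∀ r : ℝ, ERealPosPart (r : EReal) = ENNReal.ofReal r := fun r =>
    EReal.real_coe_toENNReal r
  have h2 : ∀ r : ℝ, ERealPosPart (-(r : EReal)) = ENNReal.ofReal (-r) := fun r => by
    rw [← EReal.coe_neg, h1]
  simp only [ePair, h1, h2]
  rw [integral_eq_lintegral_pos_part_sub_lintegral_neg_part hu, EReal.coe_sub]
  have hp : ∫⁻ x, ENNReal.ofReal (u x) ∂μ ≠ ⊤ := hu.lintegral_lt_top.ne
  have hn : ∫⁻ x, ENNReal.ofReal (-u x) ∂μ ≠ ⊤ := hu.neg.lintegral_lt_top.ne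
  rw [← EReal.coe_ennreal_toReal hp, ← EReal.coe_ennreal_toReal hn]

/-- For `f ≥ c` and a probability measure, the pairing is the Lebesgue integral of the nonnegative
function `f - c`, plus `c`. -/
theorem ePair_shift {Ω : Type*} [TopologicalSpace Ω] [MeasurableSpace Ω] {f : Ω → EReal}
    (hf : Measurable f) {c : ℝ} (hc : ∀ x, (c : EReal) ≤ f x) (μ : Measure Ω)
    [IsProbabilityMeasure μ] :
    ePair f μ = ((∫⁻ x, (f x - c).toENNReal ∂μ : ℝ≥0∞) : EReal) + c := by
  have hpt : ∀ x, ERealPosPart (f x) + ENNReal.ofReal (-c) =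
      (f x - c).toENNReal + (ERealPosPart (-f x) + ENNReal.ofReal c) := by
    intro x
    have hx := hc x
    change (f x).toENNReal + _ = _ + ((-f x).toENNReal + _)
    induction hfx : f x with
    | bot => simp [hfx] at hx
    | top => simp
    | coe r =>
      rw [hfx, EReal.coe_le_coe_iff] at hx
      rw [← EReal.coe_neg, ← EReal.coe_sub]
      simp only [EReal.real_coe_toENNReal]
      rcases le_total r 0 with hr | hr <;> rcases le_total c 0 with hc' | hc'
      · rw [ENNReal.ofReal_of_nonpos hr, ENNReal.ofReal_of_nonpos hc', zero_add, add_zero,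
          ← ENNReal.ofReal_add (by linarith) (by linarith)]
        congr 1; ring
      · have : r = 0 := by linarith
        have : c = 0 := by linarith
        simp [*]
      · rw [ENNReal.ofReal_of_nonpos (neg_nonpos.2 hr), ENNReal.ofReal_of_nonpos hc', add_zero,
          add_zero, ← ENNReal.ofReal_add (by linarith) (by linarith)]
        congr 1
      · rw [ENNReal.ofReal_of_nonpos (neg_nonpos.2 hr), ENNReal.ofReal_of_nonpos (neg_nonpos.2 hc'),
          add_zero, zero_add, ← ENNReal.ofReal_add (by linarith) (by linarith)]
        congr 1; ring
  have hint : ∫⁻ x, ERealPosPart (f x) ∂μ + ENNReal.ofReal (-c) =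
      ∫⁻ x, (f x - c).toENNReal ∂μ + (∫⁻ x, ERealPosPart (-f x) ∂μ + ENNReal.ofReal c) := by
    have hm : Measurable fun x => ERealPosPart (f x) := hf.ereal_toENNReal
    have hm' : Measurable fun x => ERealPosPart (-f x) := hf.neg.ereal_toENNReal
    have h := lintegral_congr (μ := μ) hpt
    rw [lintegral_add_right _ measurable_const, lintegral_add_right _ (by fun_prop),
      lintegral_add_right _ measurable_const] at h
    simpa using h
  have hfin : ∫⁻ x, ERealPosPart (-f x) ∂μ ≠ ⊤ := by
    have h1 : ∫⁻ x, ERealPosPart (-f x) ∂μ ≤ ∫⁻ _, ENNReal.ofReal (-c) ∂μ := by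
      refine lintegral_mono fun x => ?_
      have := EReal.toENNReal_le_toENNReal (EReal.neg_le_neg_iff.2 (hc x))
      rwa [← EReal.coe_neg] at this
    refine ne_top_of_le_ne_top ?_ h1
    simp
  unfold ePair
  generalize ∫⁻ x, ERealPosPart (f x) ∂μ = a at *
  generalize ∫⁻ x, ERealPosPart (-f x) ∂μ = b at *
  generalize ∫⁻ x, (f x - c).toENNReal ∂μ = d at *
  lift b to ℝ≥0 using hfin
  by_cases hd : d = ⊤
  · subst hd
    have ha : a = ⊤ := by
      by_contra ha
      rw [top_add] at hint
      exact (ENNReal.add_ne_top.2 ⟨ha, ENNReal.ofReal_ne_top⟩) hint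
    subst ha
    simp
  · have ha : a ≠ ⊤ := by
      rintro rfl
      rw [top_add] at hint
      exact (ENNReal.add_ne_top.2 ⟨hd, ENNReal.add_ne_top.2 ⟨ENNReal.coe_ne_top,
        ENNReal.ofReal_ne_top⟩⟩) hint.symm
    lift a to ℝ≥0 using ha
    lift d to ℝ≥0 using hd
    have h := congrArg ENNReal.toReal hint
    rw [ENNReal.toReal_add (by simp) (by simp), ENNReal.toReal_add (by simp) (by simp),
      ENNReal.toReal_add (by simp) (by simp)] at h
    simp only [ENNReal.coe_toReal, ENNReal.toReal_ofReal'] at h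
    change ((a : ℝ) : EReal) - ((b : ℝ) : EReal) = ((d : ℝ) : EReal) + c
    rw [← EReal.coe_sub, ← EReal.coe_add, EReal.coe_eq_coe_iff]
    rcases le_total c 0 with hc' | hc'
    · rw [max_eq_left (by linarith), max_eq_right hc'] at h; linarith
    · rw [max_eq_right (by linarith), max_eq_left hc'] at h; linarith

section Duality

variable {Ω : Type*} [MetricSpace Ω] [MeasurableSpace Ω] [BorelSpace Ω]

theorem coe_bcf_mem_L0b (u : Ω →ᵇ ℝ) : (fun x => (u x : EReal)) ∈ L0b := by
  refine ⟨u.continuous.measurable.coe_real_ereal, -‖u‖, fun x => ?_⟩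
  exact EReal.coe_le_coe_iff.2 (abs_le.1 (u.norm_coe_le_norm x)).1

theorem isCbB_coe (u : Ω →ᵇ ℝ) : IsCbB (fun x => (u x : EReal)) := by
  refine ⟨continuous_coe_real_ereal.comp u.continuous, ‖u‖, fun x => ?_⟩
  have := abs_le.1 (u.norm_coe_le_norm x)
  exact ⟨EReal.coe_le_coe_iff.2 this.1, EReal.coe_le_coe_iff.2 this.2⟩

theorem IsCbB.exists_bcf {h : Ω → EReal} (hh : IsCbB h) :
    ∃ u : Ω →ᵇ ℝ, h = fun x => (u x : EReal) := by
  obtain ⟨hc, C, hC⟩ := hh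
  have hbot : ∀ x, h x ≠ ⊥ := fun x hx => by
    have := (hC x).1
    rw [hx, ← EReal.coe_neg] at this
    simp at this
  have htop : ∀ x, h x ≠ ⊤ := fun x hx => by
    have := (hC x).2
    rw [hx] at this
    simp at this
  have hco : ∀ x, ((h x).toReal : EReal) = h x := fun x => EReal.coe_toReal (htop x) (hbot x)
  have hcont : Continuous fun x => (h x).toReal :=
    EReal.continuousOn_toReal.comp_continuous hc fun x => by simp [hbot x, htop x]
  refine ⟨BoundedContinuousFunction.ofNormedAddCommGroup (fun x => (h x).toReal) hcont C
    fun x => abs_le.2 ⟨?_, ?_⟩, funext fun x => (hco x).symm⟩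
  · have := (hC x).1
    rw [← hco x] at this
    exact_mod_cast this
  · have := (hC x).2
    rw [← hco x] at this
    exact_mod_cast this

/-- `f` is superhedged from initial capital `a`, that is, `f ≤ a + h` for some `h ∈ H`; `sprice H f`
is the infimum of all such `a`. -/
def SuperHedged (H : Set (Ω → EReal)) (f : Ω → EReal) (a : ℝ) : Prop :=
  ∃ h ∈ H, ∀ x, f x ≤ (a : EReal) + h x

theorem le_add_coe_iff {x y : EReal} (a : ℝ) : x ≤ (a : EReal) + y ↔ x - a ≤ y := by
  rw [add_comm]
  exact (EReal.sub_le_iff_le_add (Or.inl (EReal.coe_ne_bot a)) (Or.inl (EReal.coe_ne_top a))).symm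

/-- Superhedging from a fixed capital is stable under increasing limits: the `liminf` of the hedges
of the members of the sequence is a hedge of the limit. -/
theorem SuperHedged.of_tendsto {H : Set (Ω → EReal)} (hliminf : LiminfClosedB H)
    {F : ℕ → Ω → EReal} {f : Ω → EReal} {a c : ℝ} (hF : Monotone F)
    (hc : ∀ n x, (c : EReal) ≤ F n x) (hf : ∀ x, f x ≤ ⨆ n, F n x)
    (hS : ∀ n, SuperHedged H (F n) a) : SuperHedged H f a := by
  choose h hh hle using hS
  refine ⟨_, hliminf h hh ⟨c - a, fun n x => ?_⟩, fun x => ?_⟩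
  · rw [EReal.coe_sub, ← le_add_coe_iff]
    exact (hc n x).trans (hle n x)
  · refine (hf x).trans (iSup_le fun k => ?_)
    rw [le_add_coe_iff]
    refine le_liminf_of_le (by isBoundedDefault) ?_
    filter_upwards [eventually_ge_atTop k] with n hn
    rw [← le_add_coe_iff]
    exact (hF hn x).trans (hle n x)

/-- The supremum defining the penalty dominates `⟨k, μ⟩` for all `k ∈ H`, not only for continuous
ones: this is where regularity of `H` enters. -/
theorem ePair_le_sSup {H : Set (Ω → EReal)} (hsub : H ⊆ L0b) (hmono : MonotoneB H)
    (hreg : RegularB H) {k : Ω → EReal} (hk : k ∈ H) (μ : Measure Ω) [hμ : IsProbabilityMeasure μ] :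
    ePair k μ ≤ sSup {y : EReal | ∃ h ∈ H, IsCbB h ∧ y = ePair h μ} := by
  rw [← hreg μ hμ]
  obtain ⟨hkm, c, hc⟩ := hsub hk
  set S := sSup {y : EReal | ∃ h ∈ H, IsUbB h ∧ y = ePair h μ} with hS
  have key : ∀ g : Ω → ℝ≥0, UpperSemicontinuous g → (∃ n : ℝ≥0, ∀ x, g x ≤ n) →
      (∀ x, (g x : ℝ≥0∞) ≤ (k x - c).toENNReal) →
      ((∫⁻ x, g x ∂μ : ℝ≥0∞) : EReal) ≤ S - c := by
    rintro g hg ⟨n, hn⟩ hgk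
    let w : Ω → EReal := fun x => (((g x : ℝ) + c : ℝ) : EReal)
    have hwm : Measurable w := by
      have := hg.measurable
      exact (by fun_prop : Measurable fun x => (g x : ℝ) + c).coe_real_ereal
    have hwc : ∀ x, (c : EReal) ≤ w x := fun x =>
      EReal.coe_le_coe_iff.2 (by linarith [(g x).2])
    have hwk : ∀ x, w x ≤ k x := by
      intro x
      have h1 : ((g x : ℝ≥0∞) : EReal) ≤ ((k x - c).toENNReal : EReal) :=
        EReal.coe_ennreal_le_coe_ennreal_iff.2 (hgk x)
      have h0 : 0 ≤ k x - c := by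
        rw [EReal.sub_nonneg (by simp) (by simp)]
        exact hc x
      rw [EReal.coe_toENNReal h0, EReal.le_sub_iff_add_le (by simp) (by simp)] at h1
      exact h1
    have hwH : w ∈ H := hmono w ⟨hwm, c, hwc⟩ ⟨k, hk, hwk⟩
    have hwU : IsUbB w := by
      refine ⟨?_, (n : ℝ) + |c|, fun x => ⟨?_, ?_⟩⟩
      · have hφ : Continuous fun t : ℝ≥0 => (((t : ℝ) + c : ℝ) : EReal) :=
          continuous_coe_real_ereal.comp (by fun_prop)
        refine hφ.comp_upperSemicontinuous hg fun s t hst => ?_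
        have : (s : ℝ) ≤ t := hst
        exact EReal.coe_le_coe_iff.2 (by linarith)
      · rw [← EReal.coe_neg, EReal.coe_le_coe_iff]
        linarith [(g x).2, n.2, neg_abs_le c]
      · have : (g x : ℝ) ≤ n := hn x
        rw [EReal.coe_le_coe_iff]
        linarith [le_abs_self c]
    have h2 : ePair w μ ≤ S := le_sSup ⟨w, hwH, hwU, rfl⟩
    rw [ePair_shift hwm hwc μ] at h2
    rw [EReal.le_sub_iff_add_le (by simp) (by simp)]
    refine le_trans (le_of_eq ?_) h2
    congr 3
    funext x
    change _ = ((((g x : ℝ) + c : ℝ) : EReal) - c).toENNReal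
    rw [← EReal.coe_sub, add_sub_cancel_right, EReal.real_coe_toENNReal, ENNReal.ofReal_coe_nnreal]
  rw [ePair_shift hkm hc μ, ← EReal.le_sub_iff_add_le (by simp) (by simp)]
  have hS0 : 0 ≤ S - c := by
    simpa using key (fun _ => 0) upperSemicontinuous_const ⟨0, fun _ => le_rfl⟩ (by simp)
  rw [← EReal.coe_toENNReal hS0, EReal.coe_ennreal_le_coe_ennreal_iff, lintegral_eq_nnreal]
  refine iSup_le fun φ => iSup_le fun hφ => ?_
  obtain ⟨n, hn⟩ := φ.finite_range.bddAbove
  have hn' : ∀ x, φ x ≤ n := fun x => hn (mem_range_self x)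
  have hφint : (φ.map ((↑) : ℝ≥0 → ℝ≥0∞)).lintegral μ = ∫⁻ x, φ x ∂μ := by
    rw [← SimpleFunc.lintegral_eq_lintegral]; rfl
  rw [hφint]
  have hfin : ∫⁻ x, φ x ∂μ ≠ ⊤ := by
    have : ∫⁻ x, φ x ∂μ ≤ ∫⁻ _, (n : ℝ≥0∞) ∂μ :=
      lintegral_mono fun x => ENNReal.coe_le_coe.2 (hn' x)
    exact ne_top_of_le_ne_top (by simp) this
  refine ENNReal.le_of_forall_pos_le_add fun ε hε _ => ?_
  obtain ⟨g, hgφ, hg, hgi⟩ := φ.exists_upperSemicontinuous_le_lintegral_le hfin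
    (ENNReal.coe_ne_zero.2 hε.ne')
  refine hgi.trans (add_le_add_left ?_ _)
  have h3 := key g hg ⟨n, fun x => (hgφ x).trans (hn' x)⟩
    fun x => (ENNReal.coe_le_coe.2 (hgφ x)).trans (hφ x)
  rwa [← EReal.coe_toENNReal hS0, EReal.coe_ennreal_le_coe_ennreal_iff] at h3

/-- The inequality `≥` of the duality, for a single measure and a single superhedging capital. -/
theorem weak_duality {H : Set (Ω → EReal)} (hsub : H ⊆ L0b) (hmono : MonotoneB H)
    (hnorm : NormalizedB H) (hreg : RegularB H) {f : Ω → EReal} (hf : f ∈ L0b) {m : ℝ}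
    (hm : SuperHedged H f m) (μ : Measure Ω) [hμ : IsProbabilityMeasure μ] :
    ePair f μ - sSup {y : EReal | ∃ h ∈ H, IsCbB h ∧ y = ePair h μ} ≤ m := by
  obtain ⟨h, hh, hle⟩ := hm
  obtain ⟨hfm, c, hc⟩ := hf
  have hkm : Measurable fun x => f x - (m : EReal) := hfm.sub_const _
  have hkc : ∀ x, ((c - m : ℝ) : EReal) ≤ f x - m := fun x => by
    rw [EReal.coe_sub]; exact EReal.sub_le_sub (hc x) le_rfl
  have hk : (fun x => f x - (m : EReal)) ∈ H :=
    hmono _ ⟨hkm, _, hkc⟩ ⟨h, hh, fun x => (le_add_coe_iff m).1 (hle x)⟩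
  have h1 := ePair_le_sSup hsub hmono hreg hk μ
  have hfk : ePair f μ = ePair (fun x => f x - (m : EReal)) μ + m := by
    rw [ePair_shift hfm hc, ePair_shift hkm hkc, add_assoc, ← EReal.coe_add, sub_add_cancel]
    congr 4
    funext x
    congr 1
    induction f x
    · simp
    · norm_cast; ring
    · norm_cast
  rw [hfk]
  have hS0 : 0 ≤ sSup {y : EReal | ∃ h ∈ H, IsCbB h ∧ y = ePair h μ} := by
    refine le_sSup ⟨_, hnorm.1, by simpa using isCbB_coe (0 : Ω →ᵇ ℝ), ?_⟩
    have := ePair_coe (μ := μ) (u := fun _ => (0 : ℝ)) (by simp)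
    simpa using this.symm
  generalize sSup {y : EReal | ∃ h ∈ H, IsCbB h ∧ y = ePair h μ} = S at *
  induction S with
  | bot => simp at hS0
  | top => simp
  | coe s =>
    rw [EReal.sub_le_iff_le_add (by simp) (by simp), add_comm]
    exact add_le_add_right h1 _

end Duality

/-! ### Separation -/

section Separation

variable {Ω : Type*} [MetricSpace Ω] [MeasurableSpace Ω] [BorelSpace Ω]

/-- Hahn-Banach separation of the continuous elements of `H` from the continuous functions lying
uniformly above some `G k - a`.  Tightness of `H` makes the separating functional a measure. -/
theorem exists_separating_measure [Nonempty Ω] {H : Set (Ω → EReal)} (hmono : MonotoneB H)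
    (hnorm : NormalizedB H) (htight : TightB H) (hconv : ConvexB H)
    {G : ℕ → Ω →ᵇ ℝ} (hG : Antitone G) {a : ℝ}
    (hGa : ∀ k, ¬ SuperHedged H (fun x => (G k x : EReal)) a) :
    ∃ μ : Measure Ω, IsProbabilityMeasure μ ∧ ∀ u : Ω →ᵇ ℝ, (fun x => (u x : EReal)) ∈ H →
      ∀ k, (∫ x, u x ∂μ) + a ≤ ∫ x, G k x ∂μ := by
  -- the bounded continuous elements of `H`
  let Hc : Set (Ω →ᵇ ℝ) := {u | (fun x => (u x : EReal)) ∈ H}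
  let S : Set (Ω →ᵇ ℝ) := {u | ∃ k, ∃ δ : ℝ, 0 < δ ∧ ∀ x, G k x - a + δ ≤ u x}
  have hH0 : (0 : Ω →ᵇ ℝ) ∈ Hc := by simpa [Hc] using hnorm.1
  have hHc : Convex ℝ Hc := by
    intro u hu v hv s t hs ht hst
    have h := hconv _ hu _ hv s hs (by linarith)
    have ht' : 1 - s = t := by linarith
    rw [ht'] at h
    exact h
  have hSc : Convex ℝ S := by
    rintro u ⟨k, δ, hδ, hu⟩ v ⟨k', δ', hδ', hv⟩ s t hs ht hst
    refine ⟨max k k', min δ δ', lt_min hδ hδ', fun x => ?_⟩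
    have h1 : G (max k k') x ≤ G k x := hG (le_max_left k k') x
    have h2 : G (max k k') x ≤ G k' x := hG (le_max_right k k') x
    have h3 : G (max k k') x - a + min δ δ' ≤ u x := by linarith [hu x, min_le_left δ δ']
    have h4 : G (max k k') x - a + min δ δ' ≤ v x := by linarith [hv x, min_le_right δ δ']
    have h5 := add_le_add (mul_le_mul_of_nonneg_left h3 hs) (mul_le_mul_of_nonneg_left h4 ht)
    rw [← add_mul, hst, one_mul] at h5
    exact h5
  have hSo : IsOpen S := by
    rw [Metric.isOpen_iff]
    rintro u ⟨k, δ, hδ, hu⟩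
    refine ⟨δ / 2, by positivity, fun v hv => ⟨k, δ / 2, by positivity, fun x => ?_⟩⟩
    have h1 : dist (v x) (u x) < δ / 2 := (dist_coe_le_dist x).trans_lt hv
    rw [Real.dist_eq, abs_lt] at h1
    linarith [hu x, h1.1]
  have hdisj : Disjoint S Hc := by
    rw [disjoint_left]
    rintro u ⟨k, δ, hδ, hu⟩ huH
    refine hGa k ⟨_, huH, fun x => ?_⟩
    rw [← EReal.coe_add, EReal.coe_le_coe_iff]
    linarith [hu x]
  obtain ⟨f, b, hfS, hfH⟩ := geometric_hahn_banach_open hSc hSo hHc hdisj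
  let c₀ : Ω →ᵇ ℝ := G 0 + (1 - a) • 1
  have hc₀ : ∀ p : Ω →ᵇ ℝ, 0 ≤ p → c₀ + p ∈ S := by
    intro p hp
    refine ⟨0, 1, one_pos, fun x => ?_⟩
    have : 0 ≤ p x := hp x
    simp [c₀]
    linarith
  have hb0 : b ≤ 0 := by simpa using hfH 0 hH0
  have hneg : ∀ p : Ω →ᵇ ℝ, 0 ≤ p → f p ≤ 0 := by
    intro p hp
    by_contra! hcon
    -- the ray `c₀ + t p` stays in `S`, on which `f` is bounded above
    obtain ⟨n, hn⟩ := exists_nat_gt ((b - f c₀) / f p)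
    have h1 := hfS _ (hc₀ ((n : ℝ) • p) fun x => mul_nonneg n.cast_nonneg (hp x))
    rw [div_lt_iff₀ hcon] at hn
    rw [map_add, map_smul, smul_eq_mul] at h1
    linarith
  have hf1 : f 1 < 0 := by
    by_contra! hcon
    have h1 : f 1 = 0 := le_antisymm (hneg 1 fun _ => zero_le_one) hcon
    have h2 : f c₀ < b := by simpa using hfS _ (hc₀ 0 le_rfl)
    have h3 : f (‖c₀‖ • 1 - c₀) ≤ 0 := hneg _ fun x => by
      have := (abs_le.1 (c₀.norm_coe_le_norm x)).2
      simpa using this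
    rw [map_sub, map_smul, h1] at h3
    simp at h3
    linarith
  let ℓ : (Ω →ᵇ ℝ) →ₗ[ℝ] ℝ := (f 1)⁻¹ • (f : (Ω →ᵇ ℝ) →ₗ[ℝ] ℝ)
  have hℓ : ∀ u, ℓ u = (f 1)⁻¹ * f u := fun u => rfl
  have hℓ1 : ℓ 1 = 1 := inv_mul_cancel₀ hf1.ne
  have hpos : ∀ u, 0 ≤ u → 0 ≤ ℓ u := fun u hu =>
    mul_nonneg_of_nonpos_of_nonpos (inv_nonpos.2 hf1.le) (hneg u hu)
  have hsep : ∀ u ∈ Hc, ∀ k, ℓ u + a ≤ ℓ (G k) := by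
    intro u hu k
    refine le_of_forall_pos_le_add fun δ hδ => ?_
    have h1 : f (G k + (δ - a) • 1) < b := hfS _ ⟨k, δ, hδ, fun x => by simp; linarith⟩
    have h2 : ℓ u ≤ ℓ (G k + (δ - a) • 1) :=
      mul_le_mul_of_nonpos_left (h1.le.trans (hfH u hu)) (inv_nonpos.2 hf1.le)
    rw [map_add, map_smul, hℓ1, smul_eq_mul] at h2
    linarith
  obtain ⟨μ, hμ, hμℓ⟩ := exists_measure_of_tight ℓ hpos hℓ1 (by
    intro ε hε
    have hM : 0 ≤ ℓ (G 0) - a := by simpa using hsep 0 hH0 0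
    -- `n • u - 1 ∈ H` for `u ≤ 1` vanishing on `K`, so that `n * ℓ u - 1 + a ≤ ℓ (G 0)`
    obtain ⟨n, hn⟩ := exists_nat_gt ((ℓ (G 0) - a + 1) / ε)
    have hn0 : (0 : ℝ) < n := lt_of_le_of_lt (by positivity) hn
    obtain ⟨K, hK, hKH⟩ := htight 0 (by simpa using hnorm.1) n 1 one_pos
    refine ⟨K, hK, fun u hu0 hu1 huK => ?_⟩
    have hmem : (n : ℝ) • u - 1 ∈ Hc := by
      refine hmono _ (coe_bcf_mem_L0b _) ⟨_, hKH, fun x => ?_⟩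
      by_cases hx : x ∈ K
      · simp [hx, huK x hx]
      · have h1 : u x ≤ 1 := hu1 x
        have h2 : (n : ℝ) * u x - 1 ≤ 0 - 1 + n := by nlinarith
        rw [indicator_of_mem (by exact hx), ← EReal.coe_coe_eq_natCast, ← EReal.coe_sub,
          ← EReal.coe_add, EReal.coe_le_coe_iff]
        simpa using h2
    have h3 := hsep _ hmem 0
    rw [map_sub, map_smul, hℓ1, smul_eq_mul] at h3
    rw [div_lt_iff₀ hε] at hn
    by_contra! hcon
    nlinarith)
  refine ⟨μ, hμ, fun u hu k => ?_⟩
  rw [hμℓ, hμℓ]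
  exact hsep u hu k

end Separation

/-! ### Strong duality -/

section StrongDuality

variable {Ω : Type*} [MetricSpace Ω] [MeasurableSpace Ω] [BorelSpace Ω]

/-- Strong duality for a bounded real-valued Borel function. -/
theorem exists_measure_of_not_superHedged_real [Nonempty Ω] {H : Set (Ω → EReal)}
    (hmono : MonotoneB H) (hnorm : NormalizedB H) (htight : TightB H) (hconv : ConvexB H)
    (hliminf : LiminfClosedB H) {f : Ω → ℝ} (hf : Measurable f) {C : ℝ}
    (hfC : ∀ x, -C ≤ f x ∧ f x ≤ C) {a : ℝ}
    (hfa : ¬ SuperHedged H (fun x => (f x : EReal)) a) :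
    ∃ μ : Measure Ω, IsProbabilityMeasure μ ∧ ∀ u : Ω →ᵇ ℝ, (fun x => (u x : EReal)) ∈ H →
      (∫ x, u x ∂μ) + a ≤ ∫ x, f x ∂μ := by
  obtain ⟨T, c, hT, hc, hgraph⟩ := exists_analytic_graph f hf
  have hC : 0 ≤ C := by
    obtain ⟨x⟩ := ‹Nonempty Ω›
    linarith [(hfC x).1, (hfC x).2]
  let _ : MetricSpace (ℕ → ℝ) := TopologicalSpace.metrizableSpaceMetric (ℕ → ℝ)
  obtain ⟨G, hG, hGQ, hGC, hGf⟩ := capacity_aux f T c hT hc hgraph C hfC hC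
    (fun u => ¬ SuperHedged H (fun x => (u x : EReal)) a)
    (by
      rintro u v hu huv ⟨h, hh, hle⟩
      exact hu ⟨h, hh, fun x => (EReal.coe_le_coe_iff.2 (huv x)).trans (hle x)⟩)
    (by
      intro u v hmon hlow hsup hv
      by_contra! hcon
      refine hv (SuperHedged.of_tendsto hliminf (F := fun n x => (u n x : EReal)) (c := -C)
        (fun n m hnm x => EReal.coe_le_coe_iff.2 (hmon hnm x))
        (fun n x => EReal.coe_le_coe_iff.2 (hlow n x)) (fun x => ?_) hcon)
      obtain ⟨n, hn⟩ := hsup x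
      exact (EReal.coe_le_coe_iff.2 hn).trans (le_iSup (fun n => (u n x : EReal)) n))
    hfa
  obtain ⟨μ, hμ, hμG⟩ := exists_separating_measure hmono hnorm htight hconv hG hGQ
  refine ⟨μ, hμ, fun u hu => ?_⟩
  let g : Ω → ℝ := fun x => ⨅ k, G k x
  have hbdd : ∀ x, BddBelow (range fun k => G k x) := fun x =>
    ⟨-C, by rintro _ ⟨k, rfl⟩; exact (hGC k x).1⟩
  have htend : ∀ x, Tendsto (fun k => G k x) atTop (𝓝 (g x)) := fun x =>
    tendsto_atTop_ciInf (fun k l hkl => hG hkl x) (hbdd x)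
  have hgf : ∀ x, g x ≤ f x := by
    intro x
    refine le_of_forall_lt fun b hb => ?_
    obtain ⟨b', hb', hb'g⟩ := exists_between hb
    exact hb'.trans_le (hGf x b' fun k => hb'g.trans_le (ciInf_le (hbdd x) k))
  have hlim : Tendsto (fun k => ∫ x, G k x ∂μ) atTop (𝓝 (∫ x, g x ∂μ)) :=
    tendsto_integral_of_dominated_convergence (fun _ => C)
      (fun k => (G k).continuous.aestronglyMeasurable) (integrable_const C)
      (fun k => ae_of_all _ fun x => abs_le.2 (hGC k x)) (ae_of_all _ htend)
  have hfi : Integrable f μ := Integrable.of_bound hf.aestronglyMeasurable C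
    (ae_of_all _ fun x => abs_le.2 (hfC x))
  have hgi : Integrable g μ := by
    refine Integrable.of_bound (C := C)
      (aestronglyMeasurable_of_tendsto_ae atTop
        (fun k => (G k).continuous.aestronglyMeasurable) (ae_of_all _ htend))
      (ae_of_all _ fun x => abs_le.2 ⟨le_ciInf fun k => (hGC k x).1, ?_⟩)
    exact (ciInf_le (hbdd x) 0).trans (hGC 0 x).2
  exact (ge_of_tendsto' hlim fun k => hμG u hu k).trans (integral_mono hgi hfi hgf)

/-- Strong duality: a capital `a` from which `f` cannot be superhedged is dominated by the dual
expression for some measure. -/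
theorem exists_measure_of_not_superHedged [Nonempty Ω] {H : Set (Ω → EReal)}
    (hmono : MonotoneB H) (hnorm : NormalizedB H) (htight : TightB H) (hconv : ConvexB H)
    (hliminf : LiminfClosedB H) {f : Ω → EReal} (hf : f ∈ L0b) {a : ℝ}
    (hfa : ¬ SuperHedged H f a) :
    ∃ μ : Measure Ω, IsProbabilityMeasure μ ∧
      (a : EReal) ≤ ePair f μ - sSup {y : EReal | ∃ h ∈ H, IsCbB h ∧ y = ePair h μ} := by
  obtain ⟨hfm, c, hc⟩ := hf
  -- truncation of `f` from above at a sufficiently high level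
  obtain ⟨n, hn⟩ : ∃ n : ℕ, ¬ SuperHedged H (fun x => min (f x) ((n : ℝ) : EReal)) a := by
    by_contra! hcon
    refine hfa (SuperHedged.of_tendsto hliminf (c := min c 0)
      (F := fun (n : ℕ) x => min (f x) ((n : ℝ) : EReal)) ?_ ?_ ?_ hcon)
    · intro n m hnm x
      exact min_le_min_left _ (EReal.coe_le_coe_iff.2 (by exact_mod_cast hnm))
    · intro n x
      refine le_min ((EReal.coe_le_coe_iff.2 (min_le_left c 0)).trans (hc x))
        (EReal.coe_le_coe_iff.2 ((min_le_right c 0).trans n.cast_nonneg))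
    · intro x
      refine le_of_forall_lt fun b hb => ?_
      obtain ⟨r, hbr, hrf⟩ := EReal.lt_iff_exists_real_btwn.1 hb
      obtain ⟨n, hn⟩ := exists_nat_ge r
      exact lt_iSup_iff.2 ⟨n, hbr.trans_le (le_min hrf.le (EReal.coe_le_coe_iff.2 hn))⟩
  let fr : Ω → ℝ := fun x => (min (f x) ((n : ℝ) : EReal)).toReal
  have hco : ∀ x, (fr x : EReal) = min (f x) ((n : ℝ) : EReal) := by
    intro x
    refine EReal.coe_toReal ?_ ?_
    · exact ne_top_of_le_ne_top (EReal.coe_ne_top (n : ℝ)) (min_le_right _ _)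
    · rw [Ne, min_eq_bot]
      rintro (h | h)
      · have := hc x
        rw [h] at this
        simp at this
      · exact EReal.coe_ne_bot _ h
  have hfrm : Measurable fr := (hfm.min measurable_const).ereal_toReal
  have hfrC : ∀ x, -(max |c| n) ≤ fr x ∧ fr x ≤ max |c| n := by
    intro x
    constructor
    · rw [← EReal.coe_le_coe_iff, hco]
      refine le_min (le_trans (EReal.coe_le_coe_iff.2 ?_) (hc x)) (EReal.coe_le_coe_iff.2 ?_)
      · linarith [le_max_left |c| n, neg_abs_le c]
      · linarith [le_max_right |c| n, (n.cast_nonneg : (0 : ℝ) ≤ n)]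
    · rw [← EReal.coe_le_coe_iff, hco]
      exact (min_le_right _ _).trans (EReal.coe_le_coe_iff.2 (le_max_right _ _))
  obtain ⟨μ, hμ, hμu⟩ := exists_measure_of_not_superHedged_real hmono hnorm htight hconv hliminf
    hfrm hfrC (a := a) (by simpa only [hco] using hn)
  refine ⟨μ, hμ, ?_⟩
  have hfi : Integrable fr μ := Integrable.of_bound hfrm.aestronglyMeasurable _
    (ae_of_all _ fun x => abs_le.2 (hfrC x))
  have h1 : ((∫ x, fr x ∂μ : ℝ) : EReal) ≤ ePair f μ := by
    rw [← ePair_coe hfi]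
    exact ePair_mono (fun x => by rw [hco]; exact min_le_left _ _) μ
  have h2 : sSup {y : EReal | ∃ h ∈ H, IsCbB h ∧ y = ePair h μ} ≤
      (((∫ x, fr x ∂μ) - a : ℝ) : EReal) := by
    refine sSup_le ?_
    rintro _ ⟨h, hh, hcb, rfl⟩
    obtain ⟨u, rfl⟩ := hcb.exists_bcf
    rw [ePair_coe (u.integrable μ), EReal.coe_le_coe_iff]
    linarith [hμu u hh]
  calc (a : EReal) = ((∫ x, fr x ∂μ : ℝ) : EReal) - (((∫ x, fr x ∂μ) - a : ℝ) : EReal) := by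
        rw [← EReal.coe_sub, _root_.sub_sub_cancel]
    _ ≤ _ := EReal.sub_le_sub h1 h2

end StrongDuality

end Aux

/-- (Equation (2.1) in the proof of Proposition 2.4 in Bartl–Kupper, "A pointwise bipolar
theorem".)  Let `H ⊆ L⁰_{b-}` be monotone, normalized, regular, tight, convex and closed
under `liminf`, and let `φ(f) = inf{m ∈ ℝ : m + h ≥ f for some h ∈ H}`.  Then for every
`f ∈ L⁰_{b-}`,
`φ(f) = sup_{μ ∈ ca₊¹} (⟨f,μ⟩ − sup_{h ∈ H ∩ C_b} ⟨h,μ⟩)`, with the convention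
`+∞ − ∞ := −∞` (the `EReal` convention `⊤ + ⊥ = ⊥`). -/
theorem sprice_duality
    {Ω : Type*} [MetricSpace Ω] [MeasurableSpace Ω] [BorelSpace Ω]
    (H : Set (Ω → EReal)) (hsub : H ⊆ L0b)
    (hmono : MonotoneB H) (hnorm : NormalizedB H)
    (hreg : RegularB H) (htight : TightB H)
    (hconv : ConvexB H) (hliminf : LiminfClosedB H) :
    ∀ f ∈ L0b, sprice H f =
      sSup {x : EReal | ∃ μ : Measure Ω, IsProbabilityMeasure μ ∧
        x = ePair f μ - sSup {y : EReal | ∃ h ∈ H, IsCbB h ∧ y = ePair h μ}} := by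
  intro f hf
  -- on an empty space the constants `0` and `1` coincide, contradicting normalization
  have hne : Nonempty Ω := by
    by_contra hempty
    rw [not_nonempty_iff] at hempty
    refine hnorm.2 1 one_pos ?_
    convert hnorm.1
  refine le_antisymm ?_ (sSup_le ?_)
  · refine le_of_forall_lt fun b hb => ?_
    obtain ⟨a, hba, haf⟩ := EReal.lt_iff_exists_real_btwn.1 hb
    have hfa : ¬ SuperHedged H f a := fun h =>
      absurd haf (not_lt.2 (sInf_le (Set.mem_image_of_mem _ h)))
    obtain ⟨μ, hμ, hle⟩ :=
      exists_measure_of_not_superHedged hmono hnorm htight hconv hliminf hf hfa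
    exact hba.trans_le (hle.trans (le_sSup ⟨μ, hμ, rfl⟩))
  · rintro _ ⟨μ, hμ, rfl⟩
    refine le_sInf ?_
    rintro _ ⟨m, hm, rfl⟩
    exact weak_duality hsub hmono hnorm hreg hf hm μ
end
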